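/- arXiv:1308.3284 — 4 statements merged into one kernel-verified Lean document; each statement's English description precedes it below -/
import Mathlib

section
/- Let p, q ∈ ℂ[z] be coprime polynomials with W := p′q − pq′ ≠ 0 (so the rational function p/q is nonconstant), and suppose every complex root of W is real. Then there exist a, b, c, d ∈ ℂ with ad − bc ≠ 0 such that both polynomials a·p + b·q and c·p + d·q have all coefficients real; i.e., the rational function p/q becomes a quotient of real polynomials after composing with a Möbius transformation of the target. [Theorem of Eremenko–Gabrielov: a rational function with only real critical points is essentially a quotient of real polynomials; the case min{k,n−k} = 2 of the Shapiro Conjecture.] -/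
/-!
Write `W = p' q - p q'`. Every member of the pencil spanned by `p` and `q` solves
`W y'' - W' y' + V y = 0`, where `V = p'' q' - p' q''`, and the pencil is the whole space of
polynomial solutions. Hence, if `W` and `V` are real, the pencil is stable under complex
conjugation and has a real basis.

That `V` is real comes from the Bethe ansatz for the Gaudin model (Mukhin, Tarasov, Varchenko). Let
`z` be the roots of `W` and `t` those of `q`. When these are in general position, the differential
equation at the points `t k` gives the Bethe equations, and the Bethe vector is an eigenvector of
the Gaudin Hamiltonian at `u` with sites `z`, with eigenvalue `2 V(u)`. The general case follows by
deforming the pencil to one where an amplitude of the Bethe vector can be computed, over the ring of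
all algebraic functions of the deformation parameter, and specializing the characteristic
polynomial. For real `z` and `u` the Hamiltonian is Hermitian, so `V(u)` is real.
-/

namespace RealRational

open Polynomial Finset

/-! ### Symmetrization of products modulo squares -/

theorem eval_of_sq_eq_neg_two_mul {A : Type*} [CommRing A] (f : A[X]) {ε y : A}
    (hε : ε ^ 2 = -2 * y) (hy : ε * y = 0) :
    f.eval ε = f.eval 0 + ε * (derivative f).eval 0 - y * (derivative (derivative f)).eval 0 := by
  induction f using Polynomial.induction_on' with
  | add f g hf hg =>
    simp only [derivative_add, eval_add]
    linear_combination hf + hg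
  | monomial n a =>
    rcases n with _ | _ | _ | n
    · simp
    · simp [mul_comm]
    · simp only [eval_monomial, derivative_monomial]
      norm_num
      linear_combination a * hε
    · have hcube : ε ^ (n + 3) = 0 := by linear_combination ε ^ (n + 1) * hε - 2 * ε ^ n * hy
      simp [eval_monomial, hcube]

theorem prod_add_mul_of_sq_eq_neg_two_mul {κ A : Type*} [DecidableEq κ] [CommRing A]
    (s : Finset κ) (L e : κ → A) {ε y : A} (hε : ε ^ 2 = -2 * y) (hy : ε * y = 0) :
    ∏ k ∈ s, (L k + e k * ε) = ∏ k ∈ s, L k + ε * ∑ k ∈ s, e k * ∏ l ∈ s.erase k, L l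
      - y * ∑ k ∈ s, ∑ l ∈ s.erase k, e k * e l * ∏ m ∈ (s.erase k).erase l, L m := by
  have hderiv (s : Finset κ) : derivative (∏ k ∈ s, (C (L k) + C (e k) * X)) =
      ∑ k ∈ s, C (e k) * ∏ l ∈ s.erase k, (C (L l) + C (e l) * X) := by
    rw [derivative_prod_finset]
    exact sum_congr rfl fun k _ => by rw [mul_comm]; simp
  have h := eval_of_sq_eq_neg_two_mul (∏ k ∈ s, (C (L k) + C (e k) * X)) hε hy
  simpa [hderiv, eval_prod, eval_finsetSum, mul_sum, mul_assoc] using h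

theorem sum_sum_mul_sub_mul_sub {ι R : Type*} [Fintype ι] [CommRing R] (w a b : ι → R) :
    ∑ i, ∑ j, w i * w j * ((a j - a i) * (b j - b i)) =
      2 * ((∑ i, w i) * ∑ i, w i * (a i * b i) - (∑ i, w i * a i) * ∑ i, w i * b i) := by
  have expand (i j : ι) : w i * w j * ((a j - a i) * (b j - b i)) =
      w i * (w j * (a j * b j)) + w i * (a i * b i) * w j
        - w i * a i * (w j * b j) - w i * b i * (w j * a j) := by ring
  simp only [expand, sum_add_distrib, sum_sub_distrib, ← sum_mul_sum]
  ring

section PoleSum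
variable {ι K V : Type*} [Fintype ι] [Field K] [AddCommGroup V] [Module K V]

/-- The rational function `s ↦ ∑ i, x i / (s - z i)` with simple poles at the sites `z i` and
vector-valued residues `x i`. -/
def poleSum (z : ι → K) (x : ι → V) (s : K) : V :=
  ∑ i, (s - z i)⁻¹ • x i

theorem inv_mul_inv_sub {a s t : K} (hs : s ≠ a) (ht : t ≠ a) (hst : s ≠ t) :
    (s - a)⁻¹ * (t - a)⁻¹ = (s - t)⁻¹ * ((t - a)⁻¹ - (s - a)⁻¹) := by
  have := sub_ne_zero.2 hs
  have := sub_ne_zero.2 ht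
  have := sub_ne_zero.2 hst
  field_simp
  ring

theorem poleSum_inv_smul {z : ι → K} (x : ι → V) {s t : K} (hs : ∀ i, s ≠ z i)
    (ht : ∀ i, t ≠ z i) (hst : s ≠ t) :
    poleSum z (fun i => (t - z i)⁻¹ • x i) s = (s - t)⁻¹ • (poleSum z x t - poleSum z x s) := by
  simp only [poleSum, ← sum_sub_distrib, smul_sum, smul_smul, ← sub_smul,
    inv_mul_inv_sub (hs _) (ht _) hst]

end PoleSum

section BetheIdentity
variable {ι κ K A : Type*} [Fintype ι] [Field K] [CommRing A] [Algebra K A] {z : ι → K}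
  {u t t' : K}

theorem sum_sum_smul_mul_sub_mul_sub (w a b : ι → A) :
    ∑ i, ∑ j, ((u - z i)⁻¹ * (u - z j)⁻¹) • (w i * w j * ((a j - a i) * (b j - b i))) =
      2 * (poleSum z w u * poleSum z (fun i => w i * (a i * b i)) u -
        poleSum z (fun i => w i * a i) u * poleSum z (fun i => w i * b i) u) := by
  have h := sum_sum_mul_sub_mul_sub (fun i => (u - z i)⁻¹ • w i) a b
  simp only [smul_mul_smul_comm] at h
  simpa only [poleSum, smul_mul_assoc] using h

theorem poleSum_one_smul (s : K) (a : A) :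
    poleSum z (1 : ι → K) s • a = poleSum z (1 : ι → A) s * a := by
  simp [poleSum, sum_smul, sum_mul]

theorem sum_sum_smul_sub (x : ι → A) (hu : ∀ i, u ≠ z i) (ht : ∀ i, t ≠ z i) (hut : u ≠ t) :
    ∑ i, ∑ j, ((u - z i)⁻¹ * (u - z j)⁻¹) • ((t - z j)⁻¹ - (t - z i)⁻¹) • (x j - x i) =
      (2 * (u - t)⁻¹) • (poleSum z (1 : ι → K) u • poleSum z x t -
        poleSum z (1 : ι → K) t • poleSum z x u) := by
  have h := sum_sum_smul_mul_sub_mul_sub (z := z) (u := u) 1 (fun i => (t - z i)⁻¹ • 1) x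
  have hone : poleSum z (fun i => (t - z i)⁻¹ • (1 : A)) u =
      (u - t)⁻¹ • (poleSum z 1 t - poleSum z 1 u) := poleSum_inv_smul (1 : ι → A) hu ht hut
  simp only [Pi.one_apply, one_mul, smul_mul_assoc, ← sub_smul] at h
  rw [h, poleSum_inv_smul x hu ht hut, hone, poleSum_one_smul, poleSum_one_smul]
  algebra

theorem sum_sum_smul_mul (x : ι → A) (hu : ∀ i, u ≠ z i) (ht : ∀ i, t ≠ z i) (ht' : ∀ i, t' ≠ z i)
    (hut : u ≠ t) (hut' : u ≠ t') (htt' : t ≠ t') :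
    ∑ i, ∑ j, ((u - z i)⁻¹ * (u - z j)⁻¹) •
        (((t - z j)⁻¹ - (t - z i)⁻¹) • ((t' - z j)⁻¹ - (t' - z i)⁻¹) • (x i * x j)) =
      2 * (((t - t')⁻¹ * (u - t)⁻¹) • (poleSum z x u * poleSum z x t') +
        ((t' - t)⁻¹ * (u - t')⁻¹) • (poleSum z x u * poleSum z x t) -
        ((u - t)⁻¹ * (u - t')⁻¹) • (poleSum z x t * poleSum z x t')) := by
  have h := sum_sum_smul_mul_sub_mul_sub (z := z) (u := u) x (fun i => (t' - z i)⁻¹ • 1)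
    (fun i => (t - z i)⁻¹ • 1)
  simp only [← sub_smul, mul_smul_comm, mul_one] at h
  have hinv : (t' - t)⁻¹ * (u - t')⁻¹ = (u - t)⁻¹ * (u - t')⁻¹ - (t - t')⁻¹ * (u - t)⁻¹ := by
    have := sub_ne_zero.2 hut
    have := sub_ne_zero.2 hut'
    have := sub_ne_zero.2 htt'
    rw [← neg_sub t t', inv_neg]
    field_simp
    ring
  rw [h, hinv, poleSum_inv_smul (fun i => (t' - z i)⁻¹ • x i) hu ht hut,
    poleSum_inv_smul x ht ht' htt', poleSum_inv_smul x hu ht' hut', poleSum_inv_smul x hu ht hut]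
  algebra

variable [Fintype κ] [DecidableEq κ]

omit [Fintype ι] in
theorem prod_sub_prod_sub_smul_sub {x : ι → A} (hx : ∀ i, x i ^ 2 = 0) (L : κ → A) (e : κ → K)
    (i j : ι) :
    ∏ k, L k - ∏ k, (L k - e k • (x j - x i)) =
      ∑ k, (e k • (x j - x i)) * ∏ l ∈ univ.erase k, L l +
      ∑ k, ∑ l ∈ univ.erase k, (e k • e l • (x i * x j)) * ∏ m ∈ (univ.erase k).erase l, L m := by
  have h := prod_add_mul_of_sq_eq_neg_two_mul univ L (fun k => algebraMap K A (e k))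
    (ε := x i - x j) (y := x i * x j) (by linear_combination hx i + hx j)
    (by linear_combination x j * hx i - x i * hx j)
  have hsub (k : κ) : L k - e k • (x j - x i) = L k + algebraMap K A (e k) * (x i - x j) := by
    algebra
  simp only [hsub, h, mul_sum]
  rw [sub_sub_eq_add_sub, add_sub_add_left_eq_sub, sub_eq_neg_add, ← sum_neg_distrib]
  congr 1
  · exact sum_congr rfl fun k _ => by algebra
  · exact sum_congr rfl fun k _ => sum_congr rfl fun l _ => by algebra

theorem sum_sum_erase_comm {M : Type*} [AddCommMonoid M] (f : κ → κ → M) :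
    ∑ k, ∑ l ∈ univ.erase k, f k l = ∑ k, ∑ l ∈ univ.erase k, f l k :=
  sum_comm' (by simp [ne_comm])

theorem sum_sum_smul_prod_sub_prod {x : ι → A} (hx : ∀ i, x i ^ 2 = 0) (L : κ → A)
    (w : ι → ι → K) (e : κ → ι → ι → K) :
    ∑ i, ∑ j, w i j • (∏ k, L k - ∏ k, (L k - e k i j • (x j - x i))) =
      ∑ k, (∑ i, ∑ j, w i j • e k i j • (x j - x i)) * ∏ l ∈ univ.erase k, L l +
        ∑ k, ∑ l ∈ univ.erase k, (∑ i, ∑ j, w i j • e k i j • e l i j • (x i * x j)) *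
          ∏ m ∈ (univ.erase k).erase l, L m := by
  simp only [prod_sub_prod_sub_smul_sub hx L, smul_add, smul_sum, sum_add_distrib, sum_mul,
    smul_mul_assoc]
  congr 1
  · exact (sum_congr rfl fun i _ => sum_comm).trans sum_comm
  · refine (sum_congr rfl fun i _ => ?_).trans (sum_comm.trans (sum_congr rfl fun k _ => sum_comm))
    exact sum_comm.trans (sum_congr rfl fun k _ => sum_comm)

/- The terms containing `M = poleSum z x u` are the unwanted ones of the Bethe ansatz: they are
not multiples of `∏ k, poleSum z x (t k)`, and the Bethe equations are what cancels them. -/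
theorem sum_sum_smul_prod_sub_prod_of_bethe {x : ι → A} {t : κ → K} (hx : ∀ i, x i ^ 2 = 0)
    (ht : Function.Injective t) (htz : ∀ k i, t k ≠ z i)
    (bethe : ∀ k, poleSum z 1 (t k) = 2 * ∑ l ∈ univ.erase k, (t k - t l)⁻¹)
    (hu : ∀ i, u ≠ z i) (hut : ∀ k, u ≠ t k) :
    ∑ i, ∑ j, ((u - z i)⁻¹ * (u - z j)⁻¹) • (∏ k, poleSum z x (t k) -
        ∏ k, (poleSum z x (t k) - ((t k - z j)⁻¹ - (t k - z i)⁻¹) • (x j - x i))) =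
      (2 * (poleSum z 1 u * ∑ k, (u - t k)⁻¹ -
        ∑ k, ∑ l ∈ univ.erase k, (u - t k)⁻¹ * (u - t l)⁻¹)) • ∏ k, poleSum z x (t k) := by
  obtain ⟨L, hL⟩ : ∃ L : κ → A, ∀ k, poleSum z x (t k) = L k := ⟨_, fun _ => rfl⟩
  simp only [hL]
  set D : K → K := poleSum z 1
  set M : A := poleSum z x u
  have linear_term (k : κ) :
      (∑ i, ∑ j, ((u - z i)⁻¹ * (u - z j)⁻¹) •
        ((t k - z j)⁻¹ - (t k - z i)⁻¹) • (x j - x i)) * ∏ l ∈ univ.erase k, L l =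
      (2 * (D u * (u - t k)⁻¹)) • ∏ l, L l -
        (2 * (u - t k)⁻¹ * D (t k)) • (M * ∏ l ∈ univ.erase k, L l) := by
    rw [sum_sum_smul_sub x hu (htz k) (hut k), hL, ← mul_prod_erase univ L (mem_univ k)]
    algebra
  have quadratic_term (k l : κ) (hl : l ∈ univ.erase k) :
      (∑ i, ∑ j, ((u - z i)⁻¹ * (u - z j)⁻¹) • ((t k - z j)⁻¹ - (t k - z i)⁻¹) •
        ((t l - z j)⁻¹ - (t l - z i)⁻¹) • (x i * x j)) * ∏ m ∈ (univ.erase k).erase l, L m =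
      (2 * (u - t k)⁻¹ * (t k - t l)⁻¹) • (M * ∏ m ∈ univ.erase k, L m) +
        (2 * (u - t l)⁻¹ * (t l - t k)⁻¹) • (M * ∏ m ∈ univ.erase l, L m) -
          (2 * ((u - t k)⁻¹ * (u - t l)⁻¹)) • ∏ m, L m := by
    have hkl : k ≠ l := (ne_of_mem_erase hl).symm
    rw [sum_sum_smul_mul x hu (htz k) (htz l) (hut k) (hut l) (ht.ne hkl), hL, hL,
      ← mul_prod_erase univ L (mem_univ k), ← mul_prod_erase (univ.erase k) L hl,
      ← mul_prod_erase (univ.erase l) L (mem_erase.2 ⟨hkl, mem_univ k⟩), erase_right_comm (a := l)]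
    algebra
  have unwanted : ∑ k, ∑ l ∈ univ.erase k,
      (2 * (u - t k)⁻¹ * (t k - t l)⁻¹) • (M * ∏ m ∈ univ.erase k, L m) =
        ∑ k, ((u - t k)⁻¹ * D (t k)) • (M * ∏ m ∈ univ.erase k, L m) := by
    refine sum_congr rfl fun k _ => ?_
    rw [← sum_smul, ← mul_sum, bethe, mul_left_comm, mul_assoc]
  rw [sum_sum_smul_prod_sub_prod hx, sum_congr rfl fun k _ => linear_term k,
    sum_congr rfl fun k _ => sum_congr rfl (quadratic_term k)]
  simp only [sum_add_distrib, sum_sub_distrib, mul_assoc (2 : K), mul_smul (2 : K), ← smul_sum]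
    at unwanted ⊢
  rw [← sum_sum_erase_comm fun k l =>
    ((u - t k)⁻¹ * (t k - t l)⁻¹) • (M * ∏ m ∈ univ.erase k, L m), ← unwanted]
  simp only [← sum_smul, ← mul_sum]
  algebra

end BetheIdentity

/-! ### Squarefree coefficients -/

section SquarefreeCoeff
variable {ι R : Type*} [CommRing R]

/-- The exponent of the squarefree monomial `∏ i ∈ I, X i`. -/
noncomputable def squarefreeExponent (I : Finset ι) : ι →₀ ℕ :=
  ∑ i ∈ I, Finsupp.single i 1

theorem squarefreeExponent_apply [DecidableEq ι] (I : Finset ι) (i : ι) :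
    squarefreeExponent I i = if i ∈ I then 1 else 0 := by
  simp [squarefreeExponent, Finsupp.finsetSum_apply, Finsupp.single_apply]

theorem mapDomain_squarefreeExponent (σ : Equiv.Perm ι) (I : Finset ι) :
    Finsupp.mapDomain σ (squarefreeExponent I) = squarefreeExponent (σ.finsetCongr I) := by
  simp [squarefreeExponent, Finsupp.mapDomain_finsetSum, Finsupp.mapDomain_single]

theorem squarefreeExponent_sub_single [DecidableEq ι] (I : Finset ι) (i : ι) :
    squarefreeExponent I - Finsupp.single i 1 = squarefreeExponent (I.erase i) := by
  ext j
  simp only [Finsupp.coe_tsub, Pi.sub_apply, squarefreeExponent_apply, Finsupp.single_apply,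
    mem_erase]
  by_cases h : i = j <;> by_cases hj : j ∈ I <;> simp [h, hj, eq_comm]

/-- The vector of squarefree coefficients of a polynomial, indexed by sets of variables. -/
noncomputable def squarefreeCoeff : MvPolynomial ι R →ₗ[R] Finset ι → R :=
  LinearMap.pi fun I => MvPolynomial.lcoeff R (squarefreeExponent I)

theorem squarefreeCoeff_apply (f : MvPolynomial ι R) (I : Finset ι) :
    squarefreeCoeff f I = f.coeff (squarefreeExponent I) :=
  rfl

theorem squarefreeCoeff_map {S : Type*} [CommRing S] (φ : R →+* S) (f : MvPolynomial ι R)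
    (I : Finset ι) : squarefreeCoeff (f.map φ) I = φ (squarefreeCoeff f I) :=
  MvPolynomial.coeff_map φ f _

theorem squarefreeCoeff_rename_symm (σ : Equiv.Perm ι) (f : MvPolynomial ι R) (I : Finset ι) :
    squarefreeCoeff (f.rename σ.symm) I = squarefreeCoeff f (σ.finsetCongr I) := by
  rw [squarefreeCoeff_apply, squarefreeCoeff_apply, ← mapDomain_squarefreeExponent,
    ← MvPolynomial.coeff_rename_mapDomain σ σ.injective, MvPolynomial.rename_rename,
    Equiv.self_comp_symm, MvPolynomial.rename_id_apply]

variable (ι R) in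
/-- The ideal generated by the squares of the variables. Modulo this ideal a polynomial is
determined by its squarefree coefficients. -/
noncomputable def squareIdeal : Ideal (MvPolynomial ι R) :=
  Ideal.span (Set.range fun i => MvPolynomial.X i ^ 2)

theorem squarefreeCoeff_eq_zero_of_mem_squareIdeal {f : MvPolynomial ι R}
    (hf : f ∈ squareIdeal ι R) : squarefreeCoeff f = 0 := by
  classical
  have hX : (fun i : ι => (MvPolynomial.X i : MvPolynomial ι R) ^ 2) =
      (fun s => MvPolynomial.monomial s 1) ∘ fun i => Finsupp.single i 2 :=
    funext fun i => MvPolynomial.X_pow_eq_monomial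
  rw [squareIdeal, hX, Set.range_comp, MvPolynomial.mem_ideal_span_monomial_image] at hf
  ext I
  by_contra h
  obtain ⟨_, ⟨i, rfl⟩, hi⟩ := hf _ (MvPolynomial.mem_support_iff.2 h)
  have hle := hi i
  rw [squarefreeExponent_apply, Finsupp.single_eq_same] at hle
  grind

theorem squarefreeCoeff_eq_of_mk_eq {f g : MvPolynomial ι R}
    (h : Ideal.Quotient.mk (squareIdeal ι R) f = Ideal.Quotient.mk (squareIdeal ι R) g) :
    squarefreeCoeff f = squarefreeCoeff g := by
  rw [← sub_eq_zero, ← map_sub]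
  exact squarefreeCoeff_eq_zero_of_mem_squareIdeal (Ideal.Quotient.eq.1 h)

theorem squarefreeCoeff_prod_sum_smul_X {κ : Type*} [Fintype ι] (c : κ → ι → R) (e : κ → R)
    (s : Finset κ) (I : Finset ι) (hc : ∀ k, ∀ i ∈ I, c k i = e k) (hI : #I = #s) :
    squarefreeCoeff (∏ k ∈ s, ∑ i, c k i • MvPolynomial.X i) I =
      (#s).factorial * ∏ k ∈ s, e k := by
  classical
  induction s using Finset.induction_on generalizing I with
  | empty =>
    obtain rfl : I = ∅ := card_eq_zero.1 (by simpa using hI)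
    simp [squarefreeCoeff_apply, squarefreeExponent]
  | insert a s ha ih =>
    rw [card_insert_of_notMem ha] at hI ⊢
    have hsupp (i : ι) : i ∈ (squarefreeExponent I).support ↔ i ∈ I := by
      simp [squarefreeExponent_apply]
    have hterm : ∀ i ∈ I, c a i *
        squarefreeCoeff (∏ k ∈ s, ∑ i, c k i • MvPolynomial.X i) (I.erase i) =
          e a * ((#s).factorial * ∏ k ∈ s, e k) := by
      intro i hi
      rw [hc a i hi, ih _ (fun k j hj => hc k j (mem_of_mem_erase hj))
        (by rw [card_erase_of_mem hi, hI, Nat.add_sub_cancel])]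
    simp only [squarefreeCoeff_apply] at hterm ⊢
    simp only [prod_insert ha, sum_mul, MvPolynomial.coeff_sum, smul_mul_assoc,
      MvPolynomial.coeff_smul, MvPolynomial.coeff_X_mul', hsupp, squarefreeExponent_sub_single,
      smul_eq_mul, mul_ite, mul_zero, sum_ite_mem, univ_inter]
    rw [sum_congr rfl hterm, sum_const, hI, Nat.factorial_succ, nsmul_eq_mul]
    push_cast
    ring

end SquarefreeCoeff

/-! ### The Gaudin Hamiltonian and its Bethe eigenvectors -/

section Gaudin
variable {ι R : Type*} [Fintype ι] [DecidableEq ι] [CommRing R]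

/-- The Gaudin Hamiltonian `∑ i, ∑ j, (∏ k ≠ i, j, (u - z k)) (1 - (i j))` of the spin chain with
sites `z`, with denominators cleared. A configuration of spins is encoded as the set of sites with
spin down, on which the transposition `(i j)` acts by permuting sites. -/
def gaudinMatrix (z : ι → R) (u : R) : Matrix (Finset ι) (Finset ι) R :=
  ∑ i, ∑ j, (∏ k ∈ (univ.erase i).erase j, (u - z k)) •
    (1 - Equiv.Perm.permMatrix R (Equiv.swap i j).finsetCongr)

theorem gaudinMatrix_map {S : Type*} [CommRing S] (φ : R →+* S) (z : ι → R) (u : R) :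
    (gaudinMatrix z u).map φ = gaudinMatrix (φ ∘ z) (φ u) := by
  have hperm (σ : Equiv.Perm (Finset ι)) (I J : Finset ι) :
      φ (σ.permMatrix R I J) = σ.permMatrix S I J := by
    simp [PEquiv.toMatrix_apply, apply_ite φ]
  ext I J
  simp only [gaudinMatrix, Matrix.map_apply, Matrix.sum_apply, map_sum, Matrix.smul_apply,
    Matrix.sub_apply, smul_eq_mul, map_mul, map_sub, map_prod, hperm, Matrix.one_apply,
    apply_ite φ, map_one, map_zero, Function.comp_apply]

theorem gaudinMatrix_mulVec_squarefreeCoeff (z : ι → R) (u : R) (f : MvPolynomial ι R) :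
    (gaudinMatrix z u).mulVec (squarefreeCoeff f) = squarefreeCoeff (∑ i, ∑ j,
      (∏ k ∈ (univ.erase i).erase j, (u - z k)) • (f - f.rename (Equiv.swap i j))) := by
  ext I
  simp only [gaudinMatrix, Matrix.sum_mulVec, Matrix.smul_mulVec, Matrix.sub_mulVec,
    Matrix.one_mulVec, Matrix.permMatrix_mulVec, map_sum, map_smul, map_sub, Finset.sum_apply,
    Pi.smul_apply, Pi.sub_apply, Function.comp_apply, ← squarefreeCoeff_rename_symm,
    Equiv.symm_swap]

end Gaudin

section BetheEigenvector
variable {ι κ K : Type*} [Fintype ι] [DecidableEq ι] [Field K] {z : ι → K} {u : K}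

theorem prod_erase_erase_sub (hu : ∀ i, u ≠ z i) {i j : ι} (hij : i ≠ j) :
    ∏ k ∈ (univ.erase i).erase j, (u - z k) =
      (∏ k, (u - z k)) * ((u - z i)⁻¹ * (u - z j)⁻¹) := by
  rw [← mul_prod_erase univ _ (mem_univ i),
    ← mul_prod_erase (univ.erase i) _ (mem_erase.2 ⟨hij.symm, mem_univ j⟩)]
  have := sub_ne_zero.2 (hu i)
  have := sub_ne_zero.2 (hu j)
  field_simp

theorem rename_swap_poleSum (z : ι → K) (s : K) (i j : ι) :
    (poleSum z MvPolynomial.X s : MvPolynomial ι K).rename (Equiv.swap i j) =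
      poleSum z MvPolynomial.X s -
        ((s - z j)⁻¹ - (s - z i)⁻¹) • (MvPolynomial.X j - MvPolynomial.X i) := by
  rcases eq_or_ne i j with rfl | hij
  · simp
  have hperm : (poleSum z MvPolynomial.X s : MvPolynomial ι K).rename (Equiv.swap i j) =
      ∑ l, (s - z (Equiv.swap i j l))⁻¹ • MvPolynomial.X l := by
    rw [← Equiv.sum_comp (Equiv.swap i j)]
    simp [poleSum]
  rw [hperm, eq_sub_iff_add_eq, ← eq_sub_iff_add_eq', eq_comm, poleSum,
    ← sum_sub_distrib, ← sum_subset (subset_univ {i, j}), sum_pair hij]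
  · simp only [Equiv.swap_apply_left, Equiv.swap_apply_right]
    algebra
  · intro l _ hl
    simp only [mem_insert, mem_singleton, not_or] at hl
    rw [Equiv.swap_apply_of_ne_of_ne hl.1 hl.2, sub_self]

variable [Fintype κ] [DecidableEq κ] {t : κ → K}

theorem gaudinMatrix_mulVec_of_bethe (ht : Function.Injective t) (htz : ∀ k i, t k ≠ z i)
    (bethe : ∀ k, poleSum z 1 (t k) = 2 * ∑ l ∈ univ.erase k, (t k - t l)⁻¹)
    (hu : ∀ i, u ≠ z i) (hut : ∀ k, u ≠ t k) :
    (gaudinMatrix z u).mulVec (squarefreeCoeff (∏ k, poleSum z MvPolynomial.X (t k))) =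
      (2 * (∏ i, (u - z i)) * (poleSum z 1 u * ∑ k, (u - t k)⁻¹ -
        ∑ k, ∑ l ∈ univ.erase k, (u - t k)⁻¹ * (u - t l)⁻¹)) •
          squarefreeCoeff (∏ k, poleSum z MvPolynomial.X (t k)) := by
  let π := Ideal.Quotient.mkₐ K (squareIdeal ι K)
  have hπ (s : K) :
      π (poleSum z MvPolynomial.X s) = poleSum z (fun i => π (MvPolynomial.X i)) s := by
    simp [poleSum]
  have key := sum_sum_smul_prod_sub_prod_of_bethe (x := fun i => π (MvPolynomial.X i))
    (fun i => by
      rw [← map_pow]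
      exact Ideal.Quotient.eq_zero_iff_mem.2 (Ideal.subset_span ⟨i, rfl⟩)) ht htz bethe hu hut
  rw [gaudinMatrix_mulVec_squarefreeCoeff, ← map_smul]
  refine squarefreeCoeff_eq_of_mk_eq (?_ : π _ = π _)
  have hscale : ∑ i, ∑ j, (∏ k ∈ (univ.erase i).erase j, (u - z k)) •
      (∏ k, poleSum z MvPolynomial.X (t k) -
        (∏ k, poleSum z MvPolynomial.X (t k) : MvPolynomial ι K).rename (Equiv.swap i j)) =
      (∏ i, (u - z i)) • ∑ i, ∑ j, ((u - z i)⁻¹ * (u - z j)⁻¹) •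
        (∏ k, poleSum z MvPolynomial.X (t k) -
          ∏ k, (poleSum z MvPolynomial.X (t k) -
            ((t k - z j)⁻¹ - (t k - z i)⁻¹) • (MvPolynomial.X j - MvPolynomial.X i))) := by
    simp only [smul_sum, map_prod, rename_swap_poleSum]
    refine sum_congr rfl fun i _ => sum_congr rfl fun j _ => ?_
    rcases eq_or_ne i j with rfl | hij
    · simp
    · rw [prod_erase_erase_sub hu hij, smul_smul]
  rw [hscale]
  simp only [map_smul, map_sum, map_sub, map_prod, hπ, key, smul_smul]
  congr 1
  ring

end BetheEigenvector

/-! ### From the differential equation to the Bethe equations -/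

section ODE
variable {R : Type*} [CommRing R]

/-- `y` solves the linear differential equation `W y'' - W' y' + f y = 0`. If `W` is the Wronskian
of two polynomials and `f` that of their derivatives, its solution space is their span. -/
def SolvesODE (W f y : R[X]) : Prop :=
  W * derivative (derivative y) - derivative W * derivative y + f * y = 0

theorem solvesODE_wronskian_left (q p : R[X]) :
    SolvesODE (wronskian q p) (wronskian (derivative q) (derivative p)) q := by
  simp only [SolvesODE, wronskian, derivative_sub, derivative_mul]
  ring

end ODE

section HeineStieltjes
variable {ι κ K : Type*} [Field K]

theorem eval_derivative_prod_X_sub_C (s : Finset κ) (t : κ → K) {u : K}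
    (hu : ∀ k ∈ s, u ≠ t k) :
    (derivative (∏ k ∈ s, (X - C (t k)))).eval u =
      (∏ k ∈ s, (u - t k)) * ∑ k ∈ s, (u - t k)⁻¹ := by
  classical
  rw [derivative_prod_finset, eval_finsetSum, mul_sum]
  refine sum_congr rfl fun k hk => ?_
  have := sub_ne_zero.2 (hu k hk)
  simp only [derivative_X_sub_C, mul_one, eval_prod, eval_sub, eval_X, eval_C]
  rw [← mul_prod_erase s _ hk]
  field_simp

theorem eval_derivative_derivative_prod_X_sub_C [DecidableEq κ] (s : Finset κ) (t : κ → K) {u : K}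
    (hu : ∀ k ∈ s, u ≠ t k) :
    (derivative (derivative (∏ k ∈ s, (X - C (t k))))).eval u =
      (∏ k ∈ s, (u - t k)) * ∑ k ∈ s, ∑ l ∈ s.erase k, (u - t k)⁻¹ * (u - t l)⁻¹ := by
  rw [derivative_prod_finset, derivative_sum, eval_finsetSum, mul_sum]
  refine sum_congr rfl fun k hk => ?_
  have := sub_ne_zero.2 (hu k hk)
  rw [derivative_X_sub_C, mul_one,
    eval_derivative_prod_X_sub_C _ t fun l hl => hu l (mem_of_mem_erase hl),
    ← mul_prod_erase s _ hk, ← mul_sum]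
  field_simp

variable [Fintype ι] [Fintype κ] [DecidableEq κ] {z : ι → K} {t : κ → K} {f : K[X]}

theorem eval_derivative_prod_X_sub_C_eq_mul_poleSum {u : K} (hu : ∀ i, u ≠ z i) :
    (derivative (∏ i, (X - C (z i)))).eval u = (∏ i, (u - z i)) * poleSum z 1 u := by
  simpa [poleSum] using eval_derivative_prod_X_sub_C univ z fun i _ => hu i

/- Evaluate the differential equation at the root `t k` of `y`: there `W y'' = W' y'`, and
`y'' / y'` is twice the logarithmic derivative of `y / (X - t k)`. -/
theorem bethe_of_solvesODE (ht : Function.Injective t) (htz : ∀ k i, t k ≠ z i)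
    (hf : SolvesODE (∏ i, (X - C (z i))) f (∏ k, (X - C (t k)))) (k : κ) :
    poleSum z 1 (t k) = 2 * ∑ l ∈ univ.erase k, (t k - t l)⁻¹ := by
  have hne : ∀ l ∈ univ.erase k, t k ≠ t l := fun l hl => ht.ne (ne_of_mem_erase hl).symm
  have hdiff := congrArg (eval (t k)) (hf : _ = (0 : K[X]))
  rw [← mul_prod_erase univ _ (mem_univ k)] at hdiff
  simp only [derivative_mul, derivative_add, derivative_X_sub_C, one_mul, eval_zero, eval_mul,
    eval_add, eval_sub, eval_X, eval_C, sub_self, zero_mul, add_zero,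
    eval_derivative_prod_X_sub_C_eq_mul_poleSum (htz k), eval_derivative_prod_X_sub_C _ t hne,
    eval_prod] at hdiff
  apply mul_left_cancel₀ (mul_ne_zero
    (prod_ne_zero_iff.2 fun l hl => sub_ne_zero.2 (hne l hl))
    (prod_ne_zero_iff.2 fun i _ => sub_ne_zero.2 (htz k i)))
  linear_combination -hdiff

theorem eval_eq_of_solvesODE {u : K} (hu : ∀ i, u ≠ z i) (hut : ∀ k, u ≠ t k)
    (hf : SolvesODE (∏ i, (X - C (z i))) f (∏ k, (X - C (t k)))) :
    f.eval u = (∏ i, (u - z i)) * (poleSum z 1 u * ∑ k, (u - t k)⁻¹ -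
      ∑ k, ∑ l ∈ univ.erase k, (u - t k)⁻¹ * (u - t l)⁻¹) := by
  have hdiff := congrArg (eval u) (hf : _ = (0 : K[X]))
  simp only [eval_zero, eval_mul, eval_add, eval_sub,
    eval_derivative_prod_X_sub_C_eq_mul_poleSum hu,
    eval_derivative_prod_X_sub_C univ t fun k _ => hut k, eval_prod, eval_X, eval_C,
    eval_derivative_derivative_prod_X_sub_C univ t fun k _ => hut k] at hdiff
  apply mul_left_cancel₀ (prod_ne_zero_iff.2 fun k _ => sub_ne_zero.2 (hut k))
  linear_combination hdiff

omit [DecidableEq κ] in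
theorem gaudinMatrix_mulVec_of_solvesODE [DecidableEq ι] (ht : Function.Injective t)
    (htz : ∀ k i, t k ≠ z i)
    (hf : SolvesODE (∏ i, (X - C (z i))) f (∏ k, (X - C (t k)))) {u : K} (hu : ∀ i, u ≠ z i)
    (hut : ∀ k, u ≠ t k) :
    (gaudinMatrix z u).mulVec (squarefreeCoeff (∏ k, poleSum z MvPolynomial.X (t k))) =
      (2 * f.eval u) • squarefreeCoeff (∏ k, poleSum z MvPolynomial.X (t k)) := by
  classical
  rw [gaudinMatrix_mulVec_of_bethe ht htz (bethe_of_solvesODE ht htz hf) hu hut,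
    eval_eq_of_solvesODE hu hut hf, mul_assoc 2]

end HeineStieltjes

section BetheVector
variable {ι κ R K : Type*} [Fintype ι] [DecidableEq ι] [Fintype κ] [CommRing R] [Field K]

/-- The Bethe vector of the parameters `t` in the spin chain with sites `z`. The usual amplitudes
are sums of products of `(t k - z i)⁻¹`; they are multiplied here by `∏ k, ∏ i, (t k - z i)`, so
that the vector makes sense over a ring and is compatible with specialization. -/
noncomputable def betheVector (z : ι → R) (t : κ → R) : Finset ι → R :=
  squarefreeCoeff (∏ k, ∑ i, (∏ j ∈ univ.erase i, (t k - z j)) • MvPolynomial.X i)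

theorem betheVector_map {S : Type*} [CommRing S] (φ : R →+* S) (z : ι → R) (t : κ → R)
    (I : Finset ι) : betheVector (φ ∘ z) (φ ∘ t) I = φ (betheVector z t I) := by
  rw [betheVector, betheVector, ← squarefreeCoeff_map]
  simp [MvPolynomial.smul_eq_C_mul, map_prod, map_sum]

theorem prod_erase_sub_eq_mul_inv {z : ι → K} {s : K} (hs : ∀ i, s ≠ z i) (i : ι) :
    ∏ j ∈ univ.erase i, (s - z j) = (∏ j, (s - z j)) * (s - z i)⁻¹ := by
  rw [← prod_erase_mul univ _ (mem_univ i), mul_inv_cancel_right₀ (sub_ne_zero.2 (hs i))]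

theorem betheVector_eq_smul {z : ι → K} {t : κ → K} (htz : ∀ k i, t k ≠ z i) :
    betheVector z t = (∏ k, ∏ i, (t k - z i)) •
      squarefreeCoeff (∏ k, poleSum z MvPolynomial.X (t k)) := by
  rw [betheVector, ← map_smul, ← prod_smul]
  simp only [poleSum, smul_sum, smul_smul, prod_erase_sub_eq_mul_inv (htz _)]

theorem betheVector_ne_zero_of_zero_sites [CharZero K] {z : ι → K} {t : κ → K}
    (htz : ∀ k i, t k ≠ z i) (ht : ∀ k, t k ≠ 0) {I : Finset ι} (hI : #I = Fintype.card κ)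
    (hz : ∀ i ∈ I, z i = 0) : betheVector z t ≠ 0 := by
  have hamplitude : squarefreeCoeff (∏ k, poleSum z MvPolynomial.X (t k)) I =
      (#(univ : Finset κ)).factorial * ∏ k, (t k)⁻¹ :=
    squarefreeCoeff_prod_sum_smul_X (fun k i => (t k - z i)⁻¹) _ univ I
      (fun k i hi => by rw [hz i hi, sub_zero]) hI
  rw [betheVector_eq_smul htz]
  refine smul_ne_zero ?_ fun h => ?_
  · exact prod_ne_zero_iff.2 fun k _ => prod_ne_zero_iff.2 fun i _ => sub_ne_zero.2 (htz k i)
  · rw [h] at hamplitude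
    exact mul_ne_zero (Nat.cast_ne_zero.2 (Nat.factorial_ne_zero _))
      (prod_ne_zero_iff.2 fun k _ => inv_ne_zero (ht k)) hamplitude.symm

/-- The conditions on the sites `z` and the parameters `t` under which the Bethe equations make
sense and produce an eigenvector. -/
structure BetheNondegenerate (z : ι → R) (t : κ → R) : Prop where
  injective : Function.Injective t
  ne_site (k : κ) (i : ι) : t k ≠ z i
  betheVector_ne_zero : betheVector z t ≠ 0

theorem BetheNondegenerate.of_map {S : Type*} [CommRing S] {z : ι → R} {t : κ → R} (φ : R →+* S)
    (h : BetheNondegenerate (φ ∘ z) (φ ∘ t)) : BetheNondegenerate z t where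
  injective := h.injective.of_comp
  ne_site k i hki := h.ne_site k i (congrArg φ hki)
  betheVector_ne_zero h0 := h.betheVector_ne_zero <| funext fun I => by
    rw [betheVector_map, h0, Pi.zero_apply, map_zero, Pi.zero_apply]

theorem BetheNondegenerate.map {S : Type*} [CommRing S] {z : ι → R} {t : κ → R} {φ : R →+* S}
    (hφ : Function.Injective φ) (h : BetheNondegenerate z t) :
    BetheNondegenerate (φ ∘ z) (φ ∘ t) where
  injective := hφ.comp h.injective
  ne_site k i := hφ.ne (h.ne_site k i)
  betheVector_ne_zero h0 := h.betheVector_ne_zero <| funext fun I => hφ <| by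
    rw [← betheVector_map, h0, Pi.zero_apply, Pi.zero_apply, map_zero]

end BetheVector

section Eigenvalue
variable {ι κ R K : Type*} [Fintype ι] [DecidableEq ι] [Fintype κ] [CommRing R] [Field K]

theorem isRoot_charpoly_of_mulVec_eq_smul {n : Type*} [Fintype n] [DecidableEq n]
    {M : Matrix n n K} {μ : K} {v : n → K} (hv : v ≠ 0) (h : M.mulVec v = μ • v) :
    M.charpoly.IsRoot μ := by
  rw [← Matrix.charpoly_toLin', ← Module.End.hasEigenvalue_iff_isRoot_charpoly]
  exact Module.End.hasEigenvalue_of_hasEigenvector ⟨Module.End.mem_eigenspace_iff.2 h, hv⟩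

theorem isRoot_charpoly_gaudinMatrix_of_ne {z : ι → K} {t : κ → K} (h : BetheNondegenerate z t)
    {f : K[X]} (hf : SolvesODE (∏ i, (X - C (z i))) f (∏ k, (X - C (t k)))) {u : K}
    (hu : ∀ i, u ≠ z i) (hut : ∀ k, u ≠ t k) :
    (gaudinMatrix z u).charpoly.IsRoot (2 * f.eval u) := by
  refine isRoot_charpoly_of_mulVec_eq_smul h.betheVector_ne_zero ?_
  rw [betheVector_eq_smul h.ne_site, Matrix.mulVec_smul,
    gaudinMatrix_mulVec_of_solvesODE h.injective h.ne_site hf hu hut, smul_comm]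

theorem SolvesODE.map {S : Type*} [CommRing S] {W f y : R[X]} (h : SolvesODE W f y)
    (φ : R →+* S) : SolvesODE (W.map φ) (f.map φ) (y.map φ) := by
  simpa [SolvesODE, derivative_map] using congrArg (Polynomial.map φ) h

omit [DecidableEq ι] in
theorem map_prod_X_sub_C {S : Type*} [CommRing S] (φ : R →+* S) (z : ι → R) :
    (∏ i, (X - C (z i))).map φ = ∏ i, (X - C ((φ ∘ z) i)) := by
  simp [Polynomial.map_prod]

theorem isRoot_charpoly_gaudinMatrix_of_injective {φ : R →+* K} (hφ : Function.Injective φ)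
    {z : ι → R} {t : κ → R} (h : BetheNondegenerate z t) {f : R[X]}
    (hf : SolvesODE (∏ i, (X - C (z i))) f (∏ k, (X - C (t k)))) {u : R}
    (hu : ∀ i, u ≠ z i) (hut : ∀ k, u ≠ t k) :
    (gaudinMatrix z u).charpoly.IsRoot (2 * f.eval u) := by
  refine IsRoot.of_map (f := φ) ?_ hφ
  have hfield := isRoot_charpoly_gaudinMatrix_of_ne (h.map hφ) (f := f.map φ) (u := φ u)
    (by simpa only [map_prod_X_sub_C] using hf.map φ) (fun i => hφ.ne (hu i))
    (fun k => hφ.ne (hut k))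
  rwa [eval_map_apply, ← map_ofNat φ 2, ← map_mul, ← gaudinMatrix_map,
    Matrix.charpoly_map] at hfield

/- Replacing `u` by an indeterminate makes it avoid all the `z i` and `t k`. -/
theorem isRoot_charpoly_gaudinMatrix [IsDomain R] {z : ι → R} {t : κ → R}
    (h : BetheNondegenerate z t) {f : R[X]}
    (hf : SolvesODE (∏ i, (X - C (z i))) f (∏ k, (X - C (t k)))) (u : R) :
    (gaudinMatrix z u).charpoly.IsRoot (2 * f.eval u) := by
  have generic : (gaudinMatrix (C ∘ z) X).charpoly.IsRoot (2 * f) := by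
    rw [← eval₂_C_X (p := f), ← eval_map]
    exact isRoot_charpoly_gaudinMatrix_of_injective
      (IsFractionRing.injective R[X] (FractionRing R[X])) (h.map C_injective)
      (by simpa only [map_prod_X_sub_C] using hf.map C) (fun i => X_ne_C (z i))
      (fun k => X_ne_C (t k))
  have := generic.map (f := evalRingHom u)
  rw [← Matrix.charpoly_map, gaudinMatrix_map] at this
  simpa [Function.comp_def] using this

end Eigenvalue

/-! ### Wronskians -/

section Wronskian
variable {R : Type*} [CommRing R]

theorem wronskian_map {S : Type*} [CommRing S] (φ : R →+* S) (q p : R[X]) :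
    (wronskian q p).map φ = wronskian (q.map φ) (p.map φ) := by
  simp [wronskian, derivative_map]

theorem natDegree_wronskian_le (q p : R[X]) {b a : ℕ} (hq : q.natDegree ≤ b)
    (hp : p.natDegree ≤ a) : (wronskian q p).natDegree ≤ b + a - 1 := by
  by_cases h : wronskian q p = 0
  · simp [h]
  · have := natDegree_wronskian_lt_add h
    omega

theorem coeff_mul_derivative {q p : R[X]} {b a : ℕ} (hq : q.natDegree ≤ b)
    (hp : p.natDegree ≤ a) :
    (q * derivative p).coeff (b + a - 1) = a * (q.coeff b * p.coeff a) := by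
  rcases a with _ | a
  · simp [derivative_of_natDegree_zero (Nat.le_zero.1 hp)]
  · have hp' : (derivative p).natDegree ≤ a :=
      (natDegree_derivative_le p).trans (Nat.sub_le_sub_right hp 1)
    rw [← add_assoc, Nat.add_sub_cancel, coeff_mul_add_eq_of_natDegree_le hq hp', coeff_derivative]
    push_cast
    ring

theorem coeff_wronskian {q p : R[X]} {b a : ℕ} (hq : q.natDegree ≤ b) (hp : p.natDegree ≤ a) :
    (wronskian q p).coeff (b + a - 1) = ((a : R) - b) * (q.coeff b * p.coeff a) := by
  rw [wronskian, coeff_sub, coeff_mul_derivative hq hp, mul_comm (derivative q), add_comm b,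
    coeff_mul_derivative hp hq]
  ring

theorem leadingCoeff_wronskian [IsDomain R] [CharZero R] {q p : R[X]} (hq : q ≠ 0)
    (hdeg : q.natDegree < p.natDegree) : (wronskian q p).leadingCoeff =
      ((p.natDegree : R) - q.natDegree) * (q.leadingCoeff * p.leadingCoeff) := by
  have hp : p ≠ 0 := ne_zero_of_natDegree_gt hdeg
  have hcoeff := coeff_wronskian q.natDegree.le_refl p.natDegree.le_refl
  have hne : (wronskian q p).coeff (q.natDegree + p.natDegree - 1) ≠ 0 := by
    rw [hcoeff]
    exact mul_ne_zero (sub_ne_zero.2 (by exact_mod_cast hdeg.ne'))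
      (mul_ne_zero (leadingCoeff_ne_zero.2 hq) (leadingCoeff_ne_zero.2 hp))
  rw [leadingCoeff, natDegree_eq_of_le_of_coeff_ne_zero
    (natDegree_wronskian_le q p le_rfl le_rfl) hne, hcoeff, leadingCoeff, leadingCoeff]

end Wronskian

section Pencil
variable {K : Type*} [Field K] [CharZero K]

theorem exists_eq_C_mul_of_wronskian_eq_zero {f g : K[X]} (hg : g ≠ 0) (h : wronskian g f = 0) :
    ∃ c, f = C c * g := by
  refine ⟨f.coeff g.natDegree / g.leadingCoeff, sub_eq_zero.1 ?_⟩
  set c := f.coeff g.natDegree / g.leadingCoeff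
  by_contra hr
  have hcoeff : (f - C c * g).coeff g.natDegree = 0 := by
    simp [c, hg]
  have hdeg : (f - C c * g).natDegree ≠ g.natDegree := by
    rintro hdeg
    rw [← hdeg, coeff_natDegree, leadingCoeff_eq_zero] at hcoeff
    exact hr hcoeff
  have hW : wronskian g (f - C c * g) = 0 := by
    simp only [wronskian, derivative_sub, derivative_C_mul] at h ⊢
    linear_combination h
  have := coeff_wronskian (le_refl g.natDegree) (le_refl (f - C c * g).natDegree)
  simp [hW, sub_eq_zero, hdeg, hg, hr] at this

theorem SolvesODE.wronskian_wronskian_eq_zero {R : Type*} [CommRing R] {W f y g : R[X]}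
    (hy : SolvesODE W f y) (hg : SolvesODE W f g) : wronskian W (wronskian y g) = 0 := by
  simp only [SolvesODE, wronskian, derivative_sub, derivative_mul] at hy hg ⊢
  linear_combination y * hg - g * hy

theorem SolvesODE.exists_eq_C_mul_add_C_mul {q p y : K[X]} (hW : wronskian q p ≠ 0)
    (hy : SolvesODE (wronskian q p) (wronskian (derivative q) (derivative p)) y) :
    ∃ c d, y = C c * p + C d * q := by
  obtain ⟨c, hc⟩ := exists_eq_C_mul_of_wronskian_eq_zero hW
    ((solvesODE_wronskian_left q p).wronskian_wronskian_eq_zero hy)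
  have hq : q ≠ 0 := by
    rintro rfl
    exact hW (wronskian_zero_left p)
  obtain ⟨d, hd⟩ := exists_eq_C_mul_of_wronskian_eq_zero (f := y - C c * p) hq (by
    simp only [wronskian, derivative_sub, derivative_C_mul] at hc ⊢
    linear_combination hc)
  exact ⟨c, d, by rw [← hd, add_sub_cancel]⟩

end Pencil

/-! ### Deforming a pencil to a nondegenerate one -/

section Splitting
variable {R K : Type*} [CommRing R] [Field K] [IsAlgClosed K]

theorem exists_eq_prod_X_sub_C_of_monic {f : K[X]} (hf : f.Monic) {n : ℕ} (hn : f.natDegree = n) :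
    ∃ t : Fin n → K, f = ∏ k, (X - C (t k)) := by
  obtain ⟨l, hl⟩ := Quot.exists_rep f.roots
  obtain rfl : l.length = n := by
    rw [← hn, (IsAlgClosed.splits f).natDegree_eq_card_roots, ← hl]
    rfl
  refine ⟨l.get, ?_⟩
  conv_lhs => rw [(IsAlgClosed.splits f).eq_prod_roots_of_monic hf, ← hl]
  exact (Fin.prod_univ_fun_getElem l fun x => X - C x).symm

theorem exists_map_integralClosure_eq_prod_X_sub_C [Algebra R K] {f : R[X]} (hf : f.Monic) {n : ℕ}
    (hn : f.natDegree = n) : ∃ t : Fin n → integralClosure R K,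
      f.map (algebraMap R (integralClosure R K)) = ∏ k, (X - C (t k)) := by
  obtain ⟨t, ht⟩ := exists_eq_prod_X_sub_C_of_monic (hf.map (algebraMap R K))
    ((hf.natDegree_map _).trans hn)
  have hint (k : Fin n) : IsIntegral R (t k) := by
    refine ⟨f, hf, ?_⟩
    rw [← eval_map, ht, eval_prod]
    exact prod_eq_zero (mem_univ k) (by simp)
  refine ⟨fun k => ⟨t k, hint k⟩, map_injective (algebraMap (integralClosure R K) K)
    (FaithfulSMul.algebraMap_injective _ _) ?_⟩
  rw [Polynomial.map_map, ← IsScalarTower.algebraMap_eq, ht, map_prod_X_sub_C]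
  rfl

/- Lying over gives a maximal ideal of `A` above `ker φ`; its residue field is integral over the
algebraically closed field `K`, hence equal to it. -/
theorem exists_comp_algebraMap_eq_of_isIntegral {A : Type*} [CommRing A] [Algebra R A]
    [Algebra.IsIntegral R A] [FaithfulSMul R A] {φ : R →+* K} (hφ : Function.Surjective φ) :
    ∃ ψ : A →+* K, ψ.comp (algebraMap R A) = φ := by
  have := RingHom.ker_isMaximal_of_surjective φ hφ
  obtain ⟨Q, hQ, hcomap⟩ := Ideal.exists_ideal_over_maximal_of_isIntegral (S := A)
    (RingHom.ker φ) (by simp)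
  let g : R →+* A ⧸ Q := (Ideal.Quotient.mk Q).comp (algebraMap R A)
  have hker : RingHom.ker φ ≤ RingHom.ker g := by
    rw [← hcomap, ← RingHom.comap_ker, Ideal.mk_ker]
  let h : K →+* A ⧸ Q := RingHom.liftOfSurjective φ hφ ⟨g, hker⟩
  have hh : h.comp φ = g := RingHom.liftOfRightInverse_comp _ _ _ ⟨g, hker⟩
  have hint : h.IsIntegral := by
    refine RingHom.IsIntegral.tower_top φ h ?_
    rw [hh]
    exact (algebraMap_isIntegral_iff.2 inferInstance).trans _ _
      (RingHom.isIntegral_of_surjective _ Ideal.Quotient.mk_surjective)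
  let e := RingEquiv.ofBijective h (IsAlgClosed.ringHom_bijective_of_isIntegral h hint)
  refine ⟨e.symm.toRingHom.comp (Ideal.Quotient.mk Q), RingHom.ext fun r => ?_⟩
  exact e.symm_apply_eq.2 (RingHom.congr_fun hh r).symm

end Splitting

section Specialization

theorem exists_isRoot_charpoly_of_specialization {R K : Type*} [CommRing R] [IsDomain R] [Field K]
    [IsAlgClosed K] {Q P : R[X]} (hQ : Q.Monic) (hW : (wronskian Q P).Monic) {φ ψ : R →+* K}
    (hφ : Function.Surjective φ) (hψ : Function.Surjective ψ)
    (hnondeg : ∀ (z : Fin (wronskian Q P).natDegree → K) (t : Fin Q.natDegree → K),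
      Q.map ψ = ∏ k, (X - C (t k)) → (wronskian Q P).map ψ = ∏ i, (X - C (z i)) →
        BetheNondegenerate z t) :
    ∃ z : Fin (wronskian Q P).natDegree → K,
      wronskian (Q.map φ) (P.map φ) = ∏ i, (X - C (z i)) ∧ ∀ u, (gaudinMatrix z u).charpoly.IsRoot
        (2 * (wronskian (derivative (Q.map φ)) (derivative (P.map φ))).eval u) := by
  let A := integralClosure R (AlgebraicClosure (FractionRing R))
  have : FaithfulSMul R (AlgebraicClosure (FractionRing R)) := .trans R (FractionRing R) _
  have : FaithfulSMul R A := .tower_bot R A (AlgebraicClosure (FractionRing R))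
  obtain ⟨t, ht⟩ := exists_map_integralClosure_eq_prod_X_sub_C
    (K := AlgebraicClosure (FractionRing R)) hQ rfl
  obtain ⟨z, hz⟩ := exists_map_integralClosure_eq_prod_X_sub_C
    (K := AlgebraicClosure (FractionRing R)) hW rfl
  obtain ⟨Φ, rfl⟩ := exists_comp_algebraMap_eq_of_isIntegral (A := A) hφ
  obtain ⟨Ψ, rfl⟩ := exists_comp_algebraMap_eq_of_isIntegral (A := A) hψ
  have hAnondeg : BetheNondegenerate z t := by
    refine .of_map Ψ (hnondeg _ _ ?_ ?_)
    · rw [← map_prod_X_sub_C, ← ht, Polynomial.map_map]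
    · rw [← map_prod_X_sub_C, ← hz, Polynomial.map_map]
  have hode := solvesODE_wronskian_left (Q.map (algebraMap R A)) (P.map (algebraMap R A))
  rw [← wronskian_map, hz, ht] at hode
  refine ⟨Φ ∘ z, ?_, fun u => ?_⟩
  · rw [← map_prod_X_sub_C, ← hz, ← wronskian_map, Polynomial.map_map]
  · obtain ⟨r, rfl⟩ := hφ u
    have := (isRoot_charpoly_gaudinMatrix hAnondeg hode (algebraMap R A r)).map (f := Φ)
    rw [← Matrix.charpoly_map, gaudinMatrix_map, map_mul, map_ofNat, ← eval_map_apply,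
      wronskian_map, ← ht, ← derivative_map, ← derivative_map, Polynomial.map_map,
      Polynomial.map_map] at this
    exact this

end Specialization

section Model
variable {ι κ K : Type*} [Fintype ι] [Fintype κ] [Field K]

theorem card_filter_eq_zero_of_X_pow_dvd [DecidableEq K] {z : ι → K} {m : ℕ}
    (h : X ^ m ∣ ∏ i, (X - C (z i))) : m ≤ #{i | z i = 0} := by
  have hne : ∏ i, (X - C (z i)) ≠ 0 := (monic_prod_X_sub_C z univ).ne_zero
  have := (le_rootMultiplicity_iff hne (a := 0)).2 (by simpa using h)
  rw [← count_roots, roots_prod _ _ hne] at this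
  simp only [roots_X_sub_C, Multiset.bind_singleton, Multiset.count_map, eq_comm] at this
  exact this

/- At least `deg q` of the sites `z` sit at the origin, which makes one amplitude of the Bethe
vector explicit. -/
theorem betheNondegenerate_of_wronskian_X_pow [DecidableEq ι] [CharZero K] {q : K[X]}
    (hsep : q.Separable) (hq0 : q.eval 0 ≠ 0) {a : ℕ} (ha : q.natDegree < a) {c : K} {z : ι → K}
    {t : κ → K} (ht : q = ∏ k, (X - C (t k)))
    (hz : wronskian q (C c * X ^ a) = ∏ i, (X - C (z i))) :
    BetheNondegenerate z t := by
  classical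
  have hroot (k : κ) : q.eval (t k) = 0 := by
    rw [ht, eval_prod, prod_eq_zero (mem_univ k) (by simp)]
  have ht0 (k : κ) : t k ≠ 0 := fun h => hq0 (h ▸ hroot k)
  have hc : c ≠ 0 := by
    rintro rfl
    exact (monic_prod_X_sub_C z univ).ne_zero (by simp [← hz])
  have hne (k : κ) (i : ι) : t k ≠ z i := by
    intro hki
    have hder : (derivative q).eval (t k) ≠ 0 :=
      hsep.eval₂_derivative_ne_zero (RingHom.id K) (hroot k)
    have heval : (wronskian q (C c * X ^ a)).eval (t k) = 0 := by
      rw [hz, eval_prod, prod_eq_zero (mem_univ i) (by simp [hki])]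
    simp [wronskian, hroot, hder, hc, ht0] at heval
  have hdvd : X ^ (a - 1) ∣ ∏ i, (X - C (z i)) := by
    rw [← hz, wronskian, derivative_C_mul, derivative_X_pow]
    exact dvd_sub (((dvd_mul_left _ _).mul_left _).mul_left _)
      (((pow_dvd_pow _ a.pred_le).mul_left _).mul_left _)
  have hcard : Fintype.card κ ≤ #{i | z i = 0} := by
    refine (Nat.le_sub_one_of_lt ?_).trans (card_filter_eq_zero_of_X_pow_dvd hdvd)
    simpa [ht] using ha
  obtain ⟨J, hJ, hJc⟩ := exists_subset_card_eq hcard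
  exact ⟨separable_prod_X_sub_C_iff.1 (ht ▸ hsep), hne,
    betheVector_ne_zero_of_zero_sites hne ht0 hJc fun i hi => (mem_filter.1 (hJ hi)).2⟩

end Model

section Homotopy
variable {R : Type*} [CommRing R]

/-- The straight-line homotopy `(1 - s) f + s g` between two polynomials, as a polynomial over the
polynomial ring in the parameter `s`. -/
noncomputable def lineHomotopy (f g : R[X]) : R[X][X] :=
  f.map C + C X * (g - f).map C

theorem lineHomotopy_map_evalRingHom (f g : R[X]) (s : R) :
    (lineHomotopy f g).map (evalRingHom s) = f + C s * (g - f) := by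
  have h : (evalRingHom s).comp C = RingHom.id R := RingHom.ext fun r => eval_C
  simp [lineHomotopy, Polynomial.map_map, h]

theorem coeff_lineHomotopy {f g : R[X]} {n : ℕ} (h : f.coeff n = g.coeff n) :
    (lineHomotopy f g).coeff n = C (f.coeff n) := by
  simp [lineHomotopy, h]

theorem natDegree_lineHomotopy_le {f g : R[X]} {n : ℕ} (hf : f.natDegree ≤ n)
    (hg : g.natDegree ≤ n) : (lineHomotopy f g).natDegree ≤ n :=
  natDegree_add_le_of_degree_le (natDegree_map_le.trans hf) <|
    (natDegree_C_mul_le _ _).trans <| natDegree_map_le.trans <|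
      (natDegree_sub_le_of_le hg hf).trans (max_self n).le

theorem monic_wronskian_lineHomotopy [IsDomain R] [CharZero R] {q p q₁ p₁ : R[X]} (hq : q ≠ 0)
    (hdeg : q.natDegree < p.natDegree) (hW : (wronskian q p).Monic)
    (hq₁ : q₁.natDegree ≤ q.natDegree) (hqq₁ : q.leadingCoeff = q₁.coeff q.natDegree)
    (hp₁ : p₁.natDegree ≤ p.natDegree) (hpp₁ : p.leadingCoeff = p₁.coeff p.natDegree) :
    (wronskian (lineHomotopy q q₁) (lineHomotopy p p₁)).Monic := by
  have hQ := natDegree_lineHomotopy_le le_rfl hq₁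
  have hP := natDegree_lineHomotopy_le le_rfl hp₁
  refine monic_of_natDegree_le_of_coeff_eq_one _ (natDegree_wronskian_le _ _ hQ hP) ?_
  have hlead := leadingCoeff_wronskian hq hdeg
  rw [hW.leadingCoeff] at hlead
  rw [coeff_wronskian hQ hP, coeff_lineHomotopy hqq₁, coeff_lineHomotopy hpp₁, coeff_natDegree,
    coeff_natDegree, ← C_mul, ← map_natCast C, ← map_natCast C, ← C_sub, ← C_mul, ← hlead, C_1]

end Homotopy

section Pencil

theorem exists_monic_separable_eval_zero_ne_zero (K : Type*) [Field K] [CharZero K] (n : ℕ) :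
    ∃ f : K[X], f.Monic ∧ f.natDegree = n ∧ f.Separable ∧ f.eval 0 ≠ 0 := by
  refine ⟨∏ k : Fin n, (X - C (k + 1 : K)), monic_prod_X_sub_C _ _, ?_,
    separable_prod_X_sub_C_iff.2 fun k l h => Fin.ext (by simpa using h), ?_⟩
  · rw [natDegree_finsetProd_X_sub_C_eq_card, card_fin]
  · rw [eval_prod, prod_ne_zero_iff]
    intro k _
    rw [eval_sub, eval_X, eval_C, zero_sub, neg_ne_zero]
    exact Nat.cast_add_one_ne_zero _

variable {K : Type*} [Field K] [IsAlgClosed K] [CharZero K]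

theorem exists_isRoot_charpoly_gaudinMatrix {q p : K[X]} (hq : q.Monic)
    (hdeg : q.natDegree < p.natDegree) (hW : (wronskian q p).Monic) :
    ∃ (n : ℕ) (z : Fin n → K), wronskian q p = ∏ i, (X - C (z i)) ∧
      ∀ u, (gaudinMatrix z u).charpoly.IsRoot
        (2 * (wronskian (derivative q) (derivative p)).eval u) := by
  obtain ⟨q₁, hq₁, hdeg₁, hsep, hq₁0⟩ :=
    exists_monic_separable_eval_zero_ne_zero K q.natDegree
  have hqq₁ : q.leadingCoeff = q₁.coeff q.natDegree := by
    rw [hq.leadingCoeff, ← hdeg₁, hq₁.coeff_natDegree]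
  have hQ : (lineHomotopy q q₁).Monic :=
    monic_of_natDegree_le_of_coeff_eq_one _ (natDegree_lineHomotopy_le le_rfl hdeg₁.le)
      (by rw [coeff_lineHomotopy hqq₁, hq.coeff_natDegree, C_1])
  have hWQP := monic_wronskian_lineHomotopy (p₁ := C p.leadingCoeff * X ^ p.natDegree)
    hq.ne_zero hdeg hW hdeg₁.le hqq₁
    (natDegree_C_mul_X_pow_le _ _) (by simp)
  have hone (f g : K[X]) : (lineHomotopy f g).map (evalRingHom 1) = g := by
    simp [lineHomotopy_map_evalRingHom]
  have hzero (f g : K[X]) : (lineHomotopy f g).map (evalRingHom 0) = f := by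
    simp [lineHomotopy_map_evalRingHom]
  obtain ⟨z, hz, hroot⟩ := exists_isRoot_charpoly_of_specialization hQ hWQP
    (φ := evalRingHom 0) (ψ := evalRingHom 1) (eval_surjective 0) (eval_surjective 1) (by
      intro z t ht hz
      rw [hone] at ht
      rw [wronskian_map, hone, hone] at hz
      exact betheNondegenerate_of_wronskian_X_pow hsep hq₁0 (hdeg₁.trans_lt hdeg) ht hz)
  rw [hzero, hzero] at hz hroot
  exact ⟨_, z, hz, hroot⟩

end Pencil

/-! ### Pencils with real Wronskian -/

section Reality
open scoped ComplexConjugate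

theorem isHermitian_gaudinMatrix {ι R : Type*} [Fintype ι] [DecidableEq ι] [CommRing R] [StarRing R]
    {z : ι → R} {u : R} (hz : ∀ i, star (z i) = z i) (hu : star u = u) :
    (gaudinMatrix z u).IsHermitian := by
  simp only [Matrix.IsHermitian, gaudinMatrix, Matrix.conjTranspose_sum, Matrix.conjTranspose_smul,
    Matrix.conjTranspose_sub, Matrix.conjTranspose_one, Matrix.conjTranspose_permMatrix,
    star_prod, star_sub, hz, hu]
  rfl

theorem im_eq_zero_of_isRoot_charpoly {n : Type*} [Fintype n] [DecidableEq n] {M : Matrix n n ℂ}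
    (hM : M.IsHermitian) {μ : ℂ} (hμ : M.charpoly.IsRoot μ) : μ.im = 0 := by
  rw [← mem_roots M.charpoly_monic.ne_zero, hM.roots_charpoly_eq_eigenvalues] at hμ
  obtain ⟨i, -, rfl⟩ := Multiset.mem_map.1 hμ
  exact Complex.ofReal_im _

theorem map_conj_eq_of_forall_ofReal {f : ℂ[X]} (h : ∀ u : ℝ, (f.eval (u : ℂ)).im = 0) :
    f.map (starRingEnd ℂ) = f := by
  refine eq_of_infinite_eval_eq _ _
    ((Set.infinite_range_of_injective Complex.ofReal_injective).mono ?_)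
  rintro _ ⟨u, rfl⟩
  change (f.map _).eval _ = f.eval _
  rw [← Complex.conj_eq_iff_im.2 (h u), ← eval_map_apply, Complex.conj_ofReal]

theorem map_conj_wronskian {q p : ℂ[X]} (hq : q.Monic) (hdeg : q.natDegree < p.natDegree)
    (hW : (wronskian q p).Monic) (hreal : ∀ z, (wronskian q p).IsRoot z → z.im = 0) :
    (wronskian q p).map (starRingEnd ℂ) = wronskian q p ∧
      (wronskian (derivative q) (derivative p)).map (starRingEnd ℂ) =
        wronskian (derivative q) (derivative p) := by
  obtain ⟨n, z, hz, hroot⟩ := exists_isRoot_charpoly_gaudinMatrix hq hdeg hW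
  have hzreal (i : Fin n) : conj (z i) = z i := by
    refine Complex.conj_eq_iff_im.2 (hreal _ ?_)
    rw [hz, IsRoot.def, eval_prod, prod_eq_zero (mem_univ i) (by simp)]
  constructor
  · rw [hz, map_prod_X_sub_C]
    simp only [Function.comp_apply, hzreal]
  · refine map_conj_eq_of_forall_ofReal fun u => ?_
    have := im_eq_zero_of_isRoot_charpoly
      (isHermitian_gaudinMatrix hzreal (Complex.conj_ofReal u)) (hroot u)
    simpa using this

theorem map_conj_eq_of_real_wronskian {q p : ℂ[X]} (hq : q.Monic)
    (hdeg : q.natDegree < p.natDegree) (hW : (wronskian q p).Monic)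
    (hreal : ∀ z, (wronskian q p).IsRoot z → z.im = 0) :
    q.map (starRingEnd ℂ) = q ∧ ∃ d, p.map (starRingEnd ℂ) = p + C d * q := by
  obtain ⟨hconjW, hconjV⟩ := map_conj_wronskian hq hdeg hW hreal
  have hqbar : q.map (starRingEnd ℂ) = q := by
    have hode := (solvesODE_wronskian_left q p).map (starRingEnd ℂ)
    rw [hconjW, hconjV] at hode
    obtain ⟨c, d, h⟩ := hode.exists_eq_C_mul_add_C_mul hW.ne_zero
    have hp : p.leadingCoeff ≠ 0 := leadingCoeff_ne_zero.2 (ne_zero_of_natDegree_gt hdeg)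
    have hc : c = 0 := by
      simpa [coeff_eq_zero_of_natDegree_lt hdeg, hp] using congrArg (coeff · p.natDegree) h
    have hd : d = 1 := by
      simpa [hc, hq.leadingCoeff, eq_comm] using congrArg (coeff · q.natDegree) h
    simpa [hc, hd] using h
  refine ⟨hqbar, ?_⟩
  obtain ⟨d, hd⟩ := exists_eq_C_mul_of_wronskian_eq_zero (f := p.map (starRingEnd ℂ) - p)
    hq.ne_zero (by
      rw [wronskian_map, hqbar] at hconjW
      simp only [wronskian, derivative_sub] at hconjW ⊢
      linear_combination hconjW)
  exact ⟨d, by rw [← hd, add_sub_cancel]⟩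

end Reality

/-! ### Möbius transformations of the target -/

section Mobius
variable {K : Type*} [Field K]

/-- The rational functions `p / q` and `P / Q` differ by a Möbius transformation of the target, in
homogeneous form: an invertible matrix takes `(p, q)` to `(P, Q)`. -/
def MobiusEquiv (p q P Q : K[X]) : Prop :=
  ∃ a b c d : K, a * d - b * c ≠ 0 ∧ P = C a * p + C b * q ∧ Q = C c * p + C d * q

namespace MobiusEquiv
variable {p q P Q : K[X]}

theorem trans {P' Q' : K[X]} (h : MobiusEquiv p q P Q) (h' : MobiusEquiv P Q P' Q') :
    MobiusEquiv p q P' Q' := by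
  obtain ⟨a, b, c, d, hdet, rfl, rfl⟩ := h
  obtain ⟨a', b', c', d', hdet', rfl, rfl⟩ := h'
  refine ⟨a' * a + b' * c, a' * b + b' * d, c' * a + d' * c, c' * b + d' * d, ?_, ?_, ?_⟩
  · convert mul_ne_zero hdet' hdet using 1
    ring
  · simp only [C_add, C_mul]
    ring
  · simp only [C_add, C_mul]
    ring

theorem exists_wronskian_eq (h : MobiusEquiv p q P Q) :
    ∃ δ : K, δ ≠ 0 ∧ wronskian Q P = C δ * wronskian q p := by
  obtain ⟨a, b, c, d, hdet, rfl, rfl⟩ := h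
  refine ⟨a * d - b * c, hdet, ?_⟩
  simp only [wronskian, derivative_add, derivative_C_mul, C_sub, C_mul]
  ring

theorem wronskian_ne_zero (h : MobiusEquiv p q P Q) (hW : wronskian q p ≠ 0) :
    wronskian Q P ≠ 0 := by
  obtain ⟨δ, hδ, hPQ⟩ := h.exists_wronskian_eq
  rw [hPQ]
  exact mul_ne_zero (C_ne_zero.2 hδ) hW

theorem isRoot_wronskian (h : MobiusEquiv p q P Q) {z : K} (hz : (wronskian Q P).IsRoot z) :
    (wronskian q p).IsRoot z := by
  obtain ⟨δ, hδ, hPQ⟩ := h.exists_wronskian_eq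
  rw [hPQ, IsRoot.def, eval_C_mul] at hz
  exact (mul_eq_zero.1 hz).resolve_left hδ

theorem exists_degree_lt (p : K[X]) (hq : q ≠ 0) :
    ∃ P Q, MobiusEquiv p q P Q ∧ Q.degree < P.degree := by
  rcases lt_trichotomy p.degree q.degree with h | h | h
  · exact ⟨q, p, ⟨0, 1, 1, 0, by simp⟩, h⟩
  · have hp : p ≠ 0 := fun hp => hq (degree_eq_bot.1 (by simpa [hp] using h.symm))
    have hc : p.leadingCoeff / q.leadingCoeff ≠ 0 := by simp [hp, hq]
    refine ⟨q, p - C (p.leadingCoeff / q.leadingCoeff) * q,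
      ⟨0, 1, 1, -(p.leadingCoeff / q.leadingCoeff), by simp [sub_eq_add_neg]⟩, ?_⟩
    rw [← h]
    exact degree_sub_lt_left (by rw [degree_C_mul hc, h]) hp (by simp [hq])
  · exact ⟨p, q, ⟨1, 0, 0, 1, by simp⟩, h⟩

theorem exists_monic (hW : wronskian q p ≠ 0) : ∃ P Q, MobiusEquiv p q P Q ∧
    Q.Monic ∧ Q.natDegree < P.natDegree ∧ (wronskian Q P).Monic := by
  have hq : q ≠ 0 := by
    rintro rfl
    exact hW (wronskian_zero_left p)
  obtain ⟨P, Q, h, hlt⟩ := exists_degree_lt p hq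
  have hWPQ := h.wronskian_ne_zero hW
  have hQ : Q ≠ 0 := by
    rintro rfl
    exact hWPQ (wronskian_zero_left P)
  let s := Q.leadingCoeff⁻¹
  let r := s⁻¹ * (wronskian Q P).leadingCoeff⁻¹
  have hs : s ≠ 0 := by simpa [s] using hQ
  have hr : r ≠ 0 := mul_ne_zero (inv_ne_zero hs) (by simpa using hWPQ)
  refine ⟨C r * P, C s * Q, h.trans ⟨r, 0, 0, s, by simp [hr, hs]⟩,
    monic_C_mul_of_mul_leadingCoeff_eq_one (by simp [s, hQ]), ?_, ?_⟩
  · rw [natDegree_C_mul hr, natDegree_C_mul hs]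
    exact natDegree_lt_natDegree hQ hlt
  · have hrs : wronskian (C s * Q) (C r * P) = C (s * r) * wronskian Q P := by
      simp only [wronskian, derivative_C_mul, C_mul]
      ring
    rw [hrs]
    exact monic_C_mul_of_mul_leadingCoeff_eq_one (by simp [r, hs, hWPQ])

end MobiusEquiv

theorem exists_mobiusEquiv_map_conj_eq {p q : ℂ[X]} (hW : wronskian q p ≠ 0)
    (hreal : ∀ z, (wronskian q p).IsRoot z → z.im = 0) :
    ∃ P Q, MobiusEquiv p q P Q ∧ P.map (starRingEnd ℂ) = P ∧ Q.map (starRingEnd ℂ) = Q := by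
  obtain ⟨P, Q, h, hQ, hdeg, hWPQ⟩ := MobiusEquiv.exists_monic hW
  obtain ⟨hQbar, d, hPbar⟩ :=
    map_conj_eq_of_real_wronskian hQ hdeg hWPQ fun z hz => hreal z (h.isRoot_wronskian hz)
  have hinv : (starRingEnd ℂ).comp (starRingEnd ℂ) = RingHom.id ℂ :=
    RingHom.ext Complex.conj_conj
  refine ⟨P + P.map (starRingEnd ℂ), Q, h.trans ⟨2, d, 0, 1, by simp, ?_, by simp⟩, ?_, hQbar⟩
  · rw [hPbar, C_ofNat]
    ring
  · rw [Polynomial.map_add, Polynomial.map_map, hinv, Polynomial.map_id, add_comm]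

theorem im_coeff_eq_zero_of_map_conj_eq {f : ℂ[X]} (h : f.map (starRingEnd ℂ) = f) (m : ℕ) :
    (f.coeff m).im = 0 := by
  rw [← Complex.conj_eq_iff_im, ← coeff_map, h]

end Mobius

end RealRational

open Polynomial RealRational in
theorem eremenko_gabrielov_real_rational_general {p q : ℂ[X]} (hW : wronskian q p ≠ 0)
    (hreal : ∀ z, (wronskian q p).IsRoot z → z.im = 0) :
    ∃ a b c d : ℂ, a * d - b * c ≠ 0 ∧
      (∀ m : ℕ, ((C a * p + C b * q).coeff m).im = 0) ∧
      (∀ m : ℕ, ((C c * p + C d * q).coeff m).im = 0) := by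
  obtain ⟨_, _, ⟨a, b, c, d, hdet, rfl, rfl⟩, hP, hQ⟩ := exists_mobiusEquiv_map_conj_eq hW hreal
  exact ⟨a, b, c, d, hdet, im_coeff_eq_zero_of_map_conj_eq hP, im_coeff_eq_zero_of_map_conj_eq hQ⟩

/-- **Theorem of Eremenko–Gabrielov.** Let `p, q ∈ ℂ[z]` be coprime with nonzero
Wronskian `W = p′q − pq′`, and suppose every complex root of `W` is real. Then there
is a Möbius transformation of the target, given by `a, b, c, d ∈ ℂ` with
`ad − bc ≠ 0`, such that both `a·p + b·q` and `c·p + d·q` have all coefficients real;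
i.e., a rational function with only real critical points is essentially a quotient of
real polynomials. -/
theorem eremenko_gabrielov_real_rational (p q : Polynomial ℂ)
    (hco : IsCoprime p q)
    (hW : Polynomial.derivative p * q - p * Polynomial.derivative q ≠ 0)
    (hreal : ∀ z : ℂ,
      (Polynomial.derivative p * q - p * Polynomial.derivative q).IsRoot z → z.im = 0) :
    ∃ a b c d : ℂ, a * d - b * c ≠ 0 ∧
      (∀ m : ℕ, ((Polynomial.C a * p + Polynomial.C b * q).coeff m).im = 0) ∧
      (∀ m : ℕ, ((Polynomial.C c * p + Polynomial.C d * q).coeff m).im = 0) := by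
  have hwronskian : Polynomial.derivative p * q - p * Polynomial.derivative q =
      Polynomial.wronskian q p := by
    rw [Polynomial.wronskian]
    ring
  rw [hwronskian] at hW hreal
  exact eremenko_gabrielov_real_rational_general hW hreal
end

section
/- Let 1 ≤ k ≤ n, let Λ₁,…,Λ_k : ℂⁿ → ℂ be linearly independent linear functionals, and let f_i ∈ ℂ[t] be the unique polynomial of degree ≤ n−1 with f_i(s) = Λ_i(γ(s)) for all s ∈ ℂ, where γ is the rational normal curve in ℂⁿ. Set H := ⋂_{i=1}^k ker Λ_i, an (n−k)-dimensional subspace of ℂⁿ. Then for every s ∈ ℂ: Wr(f₁,…,f_k)(s) = 0 if and only if H ∩ F_k(s) ≠ {0}. [The unnumbered Lemma of Section 3 identifying roots of the Wronskian with membership in the hypersurface Schubert variety at the osculating flag.] -/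
/-- The `m`-th derivative of the rational normal curve `γ(t) = (1, t, t²/2!, …, t^{n-1}/(n-1)!)`
in `ℂⁿ`, evaluated at `t`. -/
noncomputable def gammaVec (n m : ℕ) (t : ℂ) : Fin n → ℂ :=
  fun i => Polynomial.eval t
    (Polynomial.derivative^[m]
      (Polynomial.C ((Nat.factorial (i : ℕ) : ℂ))⁻¹ * Polynomial.X ^ (i : ℕ)))

/-- The `i`-dimensional subspace `F_i(t)` osculating the rational normal curve at `γ(t)`. -/
noncomputable def oscFlag (n i : ℕ) (t : ℂ) : Submodule ℂ (Fin n → ℂ) :=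
  Submodule.span ℂ (Set.range fun m : Fin i => gammaVec n (m : ℕ) t)

/-- The Wronskian of polynomials `f 0, …, f (k-1)`. -/
noncomputable def Wr {k : ℕ} (f : Fin k → Polynomial ℂ) : Polynomial ℂ :=
  Matrix.det (Matrix.of fun i j : Fin k => Polynomial.derivative^[(i : ℕ)] (f j))

/-!
Each `Λ j ∘ γ` is a linear combination of the coordinates of `γ`, so differentiating it `i` times
amounts to applying `Λ j` to `γ^{(i)}`. Hence `Wr(f)(s)` is the determinant of the matrix
`(Λ j (γ^{(i)}(s)))`, whose rows are the images of `γ(s), …, γ^{(k-1)}(s)` under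
`(Λ₁, …, Λ_k) : ℂⁿ → ℂᵏ`. The vectors `γ^{(i)}(s)`, `i < k`, form a basis of `F_k(s)`,
because the matrix of all `γ^{(m)}(s)` with `m < n` is unitriangular. So the determinant vanishes
exactly when that map, whose kernel is `H`, is not injective on `F_k(s)`.
-/

theorem linearIndependent_comp_iff_disjoint_ker {ι R M M' : Type*} [Ring R]
    [AddCommGroup M] [AddCommGroup M'] [Module R M] [Module R M'] {v : ι → M}
    (hv : LinearIndependent R v) (f : M →ₗ[R] M') :
    LinearIndependent R (f ∘ v) ↔
      Disjoint (Submodule.span R (Set.range v)) (LinearMap.ker f) :=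
  ⟨Submodule.range_ker_disjoint, hv.map⟩

theorem det_apply_eq_zero_iff_iInf_ker_inf_span_ne_bot {ι R M : Type*} [Fintype ι]
    [DecidableEq ι] [CommRing R] [IsDomain R] [AddCommGroup M] [Module R M] {v : ι → M}
    (hv : LinearIndependent R v) (Λ : ι → M →ₗ[R] R) :
    (Matrix.of fun i j => Λ j (v i)).det = 0 ↔
      (⨅ j, LinearMap.ker (Λ j)) ⊓ Submodule.span R (Set.range v) ≠ ⊥ := by
  have hdet : (Matrix.of fun i j => Λ j (v i)).det ≠ 0 ↔ LinearIndependent R (LinearMap.pi Λ ∘ v) :=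
    Matrix.nonsingular_iff_det_ne_zero.symm.trans Matrix.linearIndependent_row_iff.symm
  rw [← not_iff_not, not_ne_iff, ← ne_eq, hdet, linearIndependent_comp_iff_disjoint_ker hv,
    LinearMap.ker_pi, disjoint_comm, disjoint_iff]

section Polynomial

open Polynomial

theorem eval_iterate_derivative_eq_apply {R ι : Type*} [CommRing R] [IsDomain R] [Infinite R]
    [Finite ι] {p : R[X]} {g : ι → R[X]} {L : (ι → R) →ₗ[R] R}
    (hp : ∀ s, p.eval s = L fun i => (g i).eval s) (m : ℕ) (s : R) :
    (derivative^[m] p).eval s = L fun i => (derivative^[m] (g i)).eval s := by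
  classical
  cases nonempty_fintype ι
  obtain ⟨c, rfl⟩ := (dotProductEquiv R ι).surjective L
  obtain rfl : p = ∑ i, c i • g i :=
    Polynomial.funext fun s => by simp [hp, dotProduct, eval_finsetSum]
  simp [dotProduct, eval_finsetSum, iterate_derivative_sum]

end Polynomial

theorem gammaVec_eq_zero_of_lt {n m : ℕ} (t : ℂ) {i : Fin n} (h : (i : ℕ) < m) :
    gammaVec n m t i = 0 := by
  simp [gammaVec, Polynomial.iterate_derivative_C_mul,
    Polynomial.iterate_derivative_X_pow_eq_natCast_mul, Nat.descFactorial_of_lt h]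

theorem gammaVec_self {n : ℕ} (t : ℂ) (i : Fin n) : gammaVec n i t i = 1 := by
  simp [gammaVec, Polynomial.iterate_derivative_C_mul,
    Polynomial.iterate_derivative_X_pow_eq_natCast_mul, Nat.descFactorial_self,
    Nat.factorial_ne_zero]

theorem det_gammaVec (n : ℕ) (t : ℂ) :
    (Matrix.of fun m i : Fin n => gammaVec n m t i).det = 1 := by
  have htri : (Matrix.of fun m i : Fin n => gammaVec n m t i).IsUpperTriangular :=
    fun m i h => gammaVec_eq_zero_of_lt t h
  rw [Matrix.det_of_isUpperTriangular htri]
  exact Finset.prod_eq_one fun i _ => gammaVec_self t i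

theorem linearIndependent_gammaVec {k n : ℕ} (hkn : k ≤ n) (t : ℂ) :
    LinearIndependent ℂ fun m : Fin k => gammaVec n m t := by
  have hfull : LinearIndependent ℂ fun m : Fin n => gammaVec n m t :=
    Matrix.linearIndependent_rows_of_det_ne_zero ((det_gammaVec n t).trans_ne one_ne_zero)
  exact hfull.comp (Fin.castLE hkn) (Fin.castLE_injective hkn)

theorem eval_Wr {k : ℕ} (f : Fin k → Polynomial ℂ) (s : ℂ) :
    (Wr f).eval s =
      (Matrix.of fun i j : Fin k => (Polynomial.derivative^[(i : ℕ)] (f j)).eval s).det := by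
  rw [Wr, ← Polynomial.coe_evalRingHom, RingHom.map_det]
  rfl

theorem eval_Wr_eq_det_apply_gammaVec {k n : ℕ} {Λ : Fin k → ((Fin n → ℂ) →ₗ[ℂ] ℂ)}
    {f : Fin k → Polynomial ℂ} (hf : ∀ i s, (f i).eval s = Λ i (gammaVec n 0 s)) (s : ℂ) :
    (Wr f).eval s = (Matrix.of fun i j : Fin k => Λ j (gammaVec n i s)).det := by
  rw [eval_Wr]
  congr! 4 with i j
  exact eval_iterate_derivative_eq_apply (hf j) i s

theorem wronskian_root_iff_schubert_general {k n : ℕ} (hkn : k ≤ n)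
    (Λ : Fin k → ((Fin n → ℂ) →ₗ[ℂ] ℂ)) (f : Fin k → Polynomial ℂ)
    (hf : ∀ i s, (f i).eval s = Λ i (gammaVec n 0 s)) (s : ℂ) :
    (Wr f).eval s = 0 ↔ (⨅ i, LinearMap.ker (Λ i)) ⊓ oscFlag n k s ≠ ⊥ := by
  rw [eval_Wr_eq_det_apply_gammaVec hf, oscFlag]
  exact det_apply_eq_zero_iff_iInf_ker_inf_span_ne_bot (linearIndependent_gammaVec hkn s) Λ

/-- **Roots of the Wronskian and the hypersurface Schubert condition.**
Let `Λ₁, …, Λ_k` be linearly independent linear functionals on `ℂⁿ` and let `f_i` be the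
polynomial with `f_i(s) = Λ_i(γ(s))` for all `s`, where `γ` is the rational normal curve.
Set `H := ⋂ ker Λ_i`.  Then `s` is a root of the Wronskian `Wr(f₁, …, f_k)` if and only
if `H ∩ F_k(s) ≠ {0}`. -/
theorem wronskian_root_iff_schubert (k n : ℕ) (hk : 1 ≤ k) (hkn : k ≤ n)
    (Λ : Fin k → ((Fin n → ℂ) →ₗ[ℂ] ℂ)) (hΛ : LinearIndependent ℂ Λ)
    (f : Fin k → Polynomial ℂ)
    (hf : ∀ i, ∀ s : ℂ, (f i).eval s = Λ i (gammaVec n 0 s)) :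
    ∀ s : ℂ, (Wr f).eval s = 0 ↔ (⨅ i, LinearMap.ker (Λ i)) ⊓ oscFlag n k s ≠ ⊥ :=
  wronskian_root_iff_schubert_general hkn Λ f hf
end

section
/- Let 1 ≤ k ≤ n−1, let t₁,…,t_{n−1} be distinct complex numbers, and set f(t) := ∏_{i=1}^{n−1}(t − t_i). Then there is a bijection between (i) the set of k-dimensional ℂ-subspaces H ⊆ ℂⁿ satisfying dim(H ∩ F_{i+1}(∞)) ≥ i for i = 1,…,k−1 and H ∩ F_{n−k}(t_i) ≠ {0} for i = 1,…,n−1, and (ii) the set of pairs (g,h) of polynomials in ℂ[t] with g monic of degree n−k−1, deg h = k−1, and g·h = f′ (the derivative of f). [Theorem identifying solutions of the osculating instance of the Schubert problem (□_{k,n}, □^{n−1}) with factorizations of f′.] -/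
/-- `F_i(∞)`: the span of the last `i` standard basis vectors of `ℂⁿ`, realized as the
subspace of vectors whose coordinates `j` with `j + i < n` all vanish. -/
noncomputable def infFlag (n i : ℕ) : Submodule ℂ (Fin n → ℂ) :=
  Submodule.pi Set.univ fun j : Fin n =>
    if (j : ℕ) + i < n then (⊥ : Submodule ℂ ℂ) else ⊤

/-!
Read vectors of `Kⁿ` as polynomials of degree less than `n`, so that `F_i(∞)` becomes the space of
polynomials of degree less than `i` and `F_{n-k}(s)` the space of multiples of `(X - s) ^ k`. For
`deg h < k` the concomitant `B q = ∑ (-1)^(k-1-j) h^{(k-1-j)} q^{(j)}` has derivative `h q^{(k)}`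
and vanishes at `s` if `(X - s) ^ k ∣ q`; on polynomials of degree less than `k` it is a perfect
pairing with constant values. The conditions at infinity make the degree-`< k` part of a solution
`G` a hyperplane of the polynomials of degree less than `k`, which is the kernel of `B` for an `h`
unique up to scalars. Then `B` maps `G` onto a line, whose elements vanish at all `t_i` and have
degree less than `n`: the line is spanned by `f = ∏ (X - t_i)`, and `B q = f` gives
`h q^{(k)} = f'`. Conversely, a factorization `g h = f'` determines `G` as the space of `q` with
`B q ∈ K f`.
-/

open Polynomial Module

section DegreeLT

variable {R : Type*}

lemma mem_degreeLT_iff_of_mem_degreeLT [Semiring R] {n i : ℕ} {p : R[X]} (hp : p ∈ degreeLT R n) :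
    p ∈ degreeLT R i ↔ ∀ j : Fin n, (j : ℕ) + i < n → p.coeff j.rev = 0 := by
  simp only [mem_degreeLT, degree_lt_iff_coeff_zero] at hp ⊢
  refine ⟨fun h j hj => h _ (by rw [Fin.val_rev]; omega), fun h d hd => ?_⟩
  rcases lt_or_ge d n with hdn | hdn
  · simpa using h (Fin.rev ⟨d, hdn⟩) (by rw [Fin.val_rev]; dsimp only; omega)
  · exact hp d hdn

lemma eq_of_coeff_rev_eq [Ring R] {n : ℕ} {p q : R[X]}
    (hp : p ∈ degreeLT R n) (hq : q ∈ degreeLT R n)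
    (h : ∀ i : Fin n, p.coeff i.rev = q.coeff i.rev) : p = q := by
  have hsub : p - q ∈ degreeLT R 0 :=
    (mem_degreeLT_iff_of_mem_degreeLT (Submodule.sub_mem _ hp hq)).2 fun i _ => by
      rw [coeff_sub, h, sub_self]
  simpa [mem_degreeLT, sub_eq_zero] using hsub

lemma degree_X_sub_C_pow [CommRing R] [Nontrivial R] (s : R) (i : ℕ) :
    degree ((X - C s : R[X]) ^ i) = (i : WithBot ℕ) := by
  rw [degree_eq_natDegree ((monic_X_sub_C s).pow i).ne_zero, (monic_X_sub_C s).natDegree_pow,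
    natDegree_X_sub_C, mul_one]

lemma span_X_sub_C_pow [CommRing R] [Nontrivial R] (m : ℕ) (s : R) :
    Submodule.span R ((fun i : ℕ => (X - C s) ^ i) '' Set.Iio m) = degreeLT R m :=
  Sequence.span_degreeLT ⟨fun i => (X - C s) ^ i, degree_X_sub_C_pow s⟩ fun i _ =>
    ((monic_X_sub_C s).pow i).leadingCoeff.symm ▸ isUnit_one

lemma notMem_degreeLT_of_pow_dvd [CommRing R] [IsDomain R] {k : ℕ} {q : R[X]} {s : R}
    (h0 : q ≠ 0) (hdvd : (X - C s) ^ k ∣ q) :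
    q ∉ degreeLT R k := by
  have hdeg := degree_le_of_dvd hdvd h0
  rw [degree_X_sub_C_pow] at hdeg
  rw [mem_degreeLT]
  exact hdeg.not_gt

lemma mem_degreeLT_of_degree_eq_pred [Semiring R] {k : ℕ} {p : R[X]} (hk : 0 < k)
    (hp : p.degree = (k - 1 : ℕ)) : p ∈ degreeLT R k := by
  rw [mem_degreeLT, hp, Nat.cast_lt]
  omega

end DegreeLT

section Derivative

variable {R : Type*}

lemma iterate_derivative_mem_degreeLT_iff [Semiring R] [IsAddTorsionFree R] {k m : ℕ} {p : R[X]} :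
    derivative^[k] p ∈ degreeLT R m ↔ p ∈ degreeLT R (m + k) := by
  simp only [mem_degreeLT, degree_lt_iff_coeff_zero, coeff_iterate_derivative, smul_eq_zero,
    Nat.descFactorial_eq_zero_iff_lt, not_lt.2 (Nat.le_add_left k _), false_or]
  refine ⟨fun h a ha => ?_, fun h a ha => h (a + k) (by omega)⟩
  simpa [show a - k + k = a by omega] using h (a - k) (by omega)

lemma iterate_derivative_eq_zero_iff [Semiring R] [IsAddTorsionFree R] {k : ℕ} {p : R[X]} :
    derivative^[k] p = 0 ↔ p ∈ degreeLT R k := by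
  rw [← zero_add k, ← iterate_derivative_mem_degreeLT_iff]
  simp [mem_degreeLT]

lemma derivative_surjective_of_charZero {K : Type*} [Field K] [CharZero K] :
    Function.Surjective (derivative : K[X] → K[X]) := by
  intro p
  induction p using Polynomial.induction_on' with
  | add p q hp hq =>
    obtain ⟨P, rfl⟩ := hp
    obtain ⟨Q, rfl⟩ := hq
    exact ⟨P + Q, derivative_add⟩
  | monomial n a =>
    refine ⟨monomial (n + 1) (a / (n + 1)), ?_⟩
    rw [derivative_monomial, Nat.cast_succ, div_mul_cancel₀ _ (Nat.cast_add_one_ne_zero n),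
      Nat.add_sub_cancel]

end Derivative

section Concomitant

variable {R : Type*} [CommRing R]

/-- The bilinear concomitant `∑_{j < k} (-1)^(k-1-j) h^{(k-1-j)} q^{(j)}` of two polynomials, whose
derivative is `h q^{(k)}` when `deg h < k`; on polynomials of degree less than `k` it is the
classical apolarity pairing. -/
noncomputable def concomitant : ℕ → R[X] →ₗ[R] R[X] →ₗ[R] R[X]
  | 0 => 0
  | k + 1 => (LinearMap.mul R R[X]).compl₂ (derivative ^ k) - (concomitant k).comp derivative

lemma concomitant_succ (k : ℕ) (h q : R[X]) :
    concomitant (k + 1) h q = h * derivative^[k] q - concomitant k (derivative h) q := by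
  simp [concomitant, Module.End.pow_apply]

lemma derivative_concomitant (k : ℕ) (h q : R[X]) :
    derivative (concomitant k h q) = h * derivative^[k] q - (-1) ^ k * (derivative^[k] h * q) := by
  induction k generalizing h with
  | zero => simp [concomitant]
  | succ k ih =>
    rw [concomitant_succ, derivative_sub, ih, derivative_mul, Function.iterate_succ_apply' _ k q,
      Function.iterate_succ_apply _ k h]
    ring

lemma derivative_concomitant_of_mem_degreeLT {k : ℕ} {h : R[X]} (hh : h ∈ degreeLT R k)
    (q : R[X]) : derivative (concomitant k h q) = h * derivative^[k] q := by
  rw [derivative_concomitant, iterate_derivative_eq_zero_of_degree_lt (mem_degreeLT.1 hh)]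
  simp

lemma eval_concomitant_of_pow_dvd {k : ℕ} {q : R[X]} {s : R} (hq : (X - C s) ^ k ∣ q) (h : R[X]) :
    (concomitant k h q).eval s = 0 := by
  induction k generalizing h with
  | zero => simp [concomitant]
  | succ k ih =>
    have hroot : (derivative^[k] q).eval s = 0 := by
      simpa [dvd_iff_isRoot] using pow_sub_dvd_iterate_derivative_of_pow_dvd k hq
    rw [concomitant_succ, eval_sub, eval_mul, hroot, ih ((pow_dvd_pow _ k.le_succ).trans hq)]
    simp

lemma natDegree_concomitant_le [IsAddTorsionFree R] {k : ℕ} {h : R[X]} (hh : h.natDegree < k)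
    (q : R[X]) : (concomitant k h q).natDegree ≤ q.natDegree := by
  have hderiv := derivative_concomitant_of_mem_degreeLT
    (mem_degreeLT.2 (degree_le_natDegree.trans_lt (Nat.cast_lt.2 hh))) q
  rcases Nat.lt_or_ge q.natDegree k with hqk | hqk
  · rw [iterate_derivative_eq_zero hqk, mul_zero, derivative_eq_zero] at hderiv
    omega
  · have hmul := natDegree_mul_le (p := h) (q := derivative^[k] q)
    have hq := natDegree_iterate_derivative q k
    rw [← hderiv, natDegree_derivative] at hmul
    omega

lemma exists_concomitant_eq_C [IsAddTorsionFree R] {k : ℕ} {h q : R[X]} (hh : h ∈ degreeLT R k)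
    (hq : q ∈ degreeLT R k) : ∃ c, concomitant k h q = C c := by
  refine ⟨_, eq_C_of_derivative_eq_zero ?_⟩
  rw [derivative_concomitant_of_mem_degreeLT hh, iterate_derivative_eq_zero_iff.2 hq, mul_zero]

lemma exists_pow_dvd_concomitant_eq [IsAddTorsionFree R] [Nontrivial R] {k : ℕ} {h q : R[X]} {s : R}
    (hh : h ∈ degreeLT R k) (hq : (concomitant k h q).IsRoot s) :
    ∃ p, (X - C s) ^ k ∣ p ∧ q - p ∈ degreeLT R k ∧ concomitant k h p = concomitant k h q := by
  have hr : q %ₘ (X - C s) ^ k ∈ degreeLT R k := by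
    simpa [mem_degreeLT, degree_X_sub_C_pow] using degree_modByMonic_lt q ((monic_X_sub_C s).pow k)
  have hdvd : (X - C s) ^ k ∣ q - q %ₘ (X - C s) ^ k := by
    simpa using dvd_modByMonic_sub q ((X - C s) ^ k) |>.neg_right
  refine ⟨q - q %ₘ (X - C s) ^ k, hdvd, by simpa using hr, ?_⟩
  obtain ⟨c, hc⟩ := exists_concomitant_eq_C hh hr
  have hc0 : c = 0 := by
    simpa [hc, hq.eq_zero] using eval_concomitant_of_pow_dvd hdvd h
  rw [map_sub, hc, hc0, C_0, sub_zero]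

lemma mem_degreeLT_of_concomitant_eq_zero [IsDomain R] [CharZero R] {k : ℕ} {h q : R[X]}
    (hh : h ∈ degreeLT R k) (h0 : h ≠ 0) (hq : concomitant k h q = 0) : q ∈ degreeLT R k := by
  have hprod : h * derivative^[k] q = 0 := by
    rw [← derivative_concomitant_of_mem_degreeLT hh, hq, derivative_zero]
  exact iterate_derivative_eq_zero_iff.1 ((mul_eq_zero.1 hprod).resolve_left h0)

lemma exists_concomitant_ne_zero [IsDomain R] [CharZero R] {k : ℕ} {h : R[X]}
    (hh : h ∈ degreeLT R k) (h0 : h ≠ 0) : ∃ u ∈ degreeLT R k, concomitant k h u ≠ 0 := by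
  by_contra! hzero
  -- `X ^ k` and `(X - s) ^ k` have the same concomitant with `h`, and the latter vanishes at `s`.
  have hXk : concomitant k h (X ^ k) = 0 := by
    refine Polynomial.funext fun s => ?_
    have hlow : X ^ k - (X - C s) ^ k ∈ degreeLT R k := by
      rw [mem_degreeLT]
      simpa using degree_sub_lt_left (p := (X : R[X]) ^ k) (q := (X - C s) ^ k)
        (by simp) (by simp) (by simp [(monic_X_sub_C s).pow k |>.leadingCoeff])
    have heq := hzero _ hlow
    rw [map_sub, sub_eq_zero] at heq
    rw [heq, eval_concomitant_of_pow_dvd dvd_rfl, eval_zero]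
  simpa [mem_degreeLT] using mem_degreeLT_of_concomitant_eq_zero hh h0 hXk

end Concomitant

section Kernel

variable {K : Type*} [Field K]

lemma finrank_degreeLT (n : ℕ) : finrank K (degreeLT K n) = n := by
  simp [(degreeLTEquiv K n).finrank_eq]

lemma finrank_map_add_finrank_inf_ker {V W : Type*} [AddCommGroup V] [Module K V]
    [AddCommGroup W] [Module K W] (T : V →ₗ[K] W) (S : Submodule K V) [FiniteDimensional K S] :
    finrank K (S.map T) + finrank K ↥(S ⊓ LinearMap.ker T) = finrank K S := by
  rw [← LinearMap.finrank_range_add_finrank_ker (T.domRestrict S), LinearMap.range_domRestrict,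
    LinearMap.ker_domRestrict, ← Submodule.map_comap_subtype, Submodule.finrank_map_subtype_eq]

variable [CharZero K] {k : ℕ} {h : K[X]}

lemma map_concomitant_degreeLT_le (hh : h ∈ degreeLT K k) {i : ℕ} (hi : i ≤ k) :
    (degreeLT K i).map (concomitant k h) ≤ K ∙ 1 := by
  rintro _ ⟨q, hq, rfl⟩
  obtain ⟨c, hc⟩ := exists_concomitant_eq_C hh (degreeLT_mono hi hq)
  exact Submodule.mem_span_singleton.2 ⟨c, by rw [hc, smul_eq_C_mul, mul_one]⟩

lemma map_concomitant_degreeLT_eq (hh : h ∈ degreeLT K k) (h0 : h ≠ 0) :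
    (degreeLT K k).map (concomitant k h) = K ∙ 1 := by
  obtain ⟨u, hu, hne⟩ := exists_concomitant_ne_zero hh h0
  have hle := map_concomitant_degreeLT_le hh le_rfl
  refine le_antisymm hle ((Submodule.span_singleton_le_iff_mem _ _).2 ?_)
  obtain ⟨c, hc⟩ := Submodule.mem_span_singleton.1 (hle (Submodule.mem_map_of_mem hu))
  have hc0 : c ≠ 0 := fun hz => hne (by rw [← hc, hz, zero_smul])
  exact (Submodule.smul_mem_iff _ hc0).1 (hc ▸ Submodule.mem_map_of_mem hu)

lemma ker_concomitant_le (hh : h ∈ degreeLT K k) (h0 : h ≠ 0) :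
    LinearMap.ker (concomitant k h) ≤ degreeLT K k := fun _ hq =>
  mem_degreeLT_of_concomitant_eq_zero hh h0 hq

lemma finrank_ker_concomitant (hh : h ∈ degreeLT K k) (h0 : h ≠ 0) :
    1 + finrank K (LinearMap.ker (concomitant k h)) = k := by
  have hsum := finrank_map_add_finrank_inf_ker (concomitant k h) (degreeLT K k)
  rwa [map_concomitant_degreeLT_eq hh h0, finrank_span_singleton one_ne_zero, finrank_degreeLT,
    inf_eq_right.2 (ker_concomitant_le hh h0)] at hsum

lemma le_finrank_ker_concomitant_inf_degreeLT (hh : h ∈ degreeLT K k) {i : ℕ} (hi : i < k) :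
    i ≤ finrank K ↥(LinearMap.ker (concomitant k h) ⊓ degreeLT K (i + 1)) := by
  have hsum := finrank_map_add_finrank_inf_ker (concomitant k h) (degreeLT K (i + 1))
  have hmap := Submodule.finrank_mono (map_concomitant_degreeLT_le hh (i := i + 1) hi)
  rw [finrank_span_singleton one_ne_zero] at hmap
  rw [finrank_degreeLT] at hsum
  rw [inf_comm]
  omega

lemma exists_ker_concomitant_eq {W : Submodule K K[X]} (hW : W ≤ degreeLT K k)
    (hrank : 1 + finrank K W = k) :
    ∃ h ∈ degreeLT K k, h ≠ 0 ∧ LinearMap.ker (concomitant k h) = W := by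
  have : FiniteDimensional K W := Submodule.finiteDimensional_of_le hW
  let pairing : degreeLT K k →ₗ[K] Dual K W :=
    ((concomitant k).compr₂ (lcoeff K 0)).domRestrict₁₂ (degreeLT K k) W
  have hker : LinearMap.ker pairing ≠ ⊥ := by
    apply LinearMap.ker_ne_bot_of_finrank_lt
    rw [finrank_degreeLT, Subspace.dual_finrank_eq]
    omega
  obtain ⟨⟨h, hh⟩, hpair, hne⟩ := Submodule.exists_mem_ne_zero_of_ne_bot hker
  have h0 : h ≠ 0 := by simpa using hne
  have hle : W ≤ LinearMap.ker (concomitant k h) := by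
    intro q hq
    obtain ⟨c, hc⟩ := exists_concomitant_eq_C hh (hW hq)
    have hcoeff : (concomitant k h q).coeff 0 = 0 :=
      LinearMap.congr_fun (LinearMap.mem_ker.1 hpair) ⟨q, hq⟩
    rw [hc, coeff_C_zero] at hcoeff
    rw [LinearMap.mem_ker, hc, hcoeff, C_0]
  have : FiniteDimensional K (LinearMap.ker (concomitant k h)) :=
    Submodule.finiteDimensional_of_le (ker_concomitant_le hh h0)
  refine ⟨h, hh, h0, (Submodule.eq_of_le_of_finrank_le hle ?_).symm⟩
  have := finrank_ker_concomitant hh h0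
  omega

end Kernel

section SolutionSpace

variable {K : Type*} [Field K] {k m n : ℕ} {f g h : K[X]}

/-- The polynomials `q` of degree less than `n` such that `concomitant k h q` is a scalar multiple
of `f`: the osculating solution attached to a factorization `g * h` of the derivative of `f`. -/
noncomputable def solutionSpace (k n : ℕ) (f h : K[X]) : Submodule K K[X] :=
  degreeLT K n ⊓ (K ∙ f).comap (concomitant k h)

lemma solutionSpace_C_mul {c : K} (hc : c ≠ 0) :
    solutionSpace k n f (C c * h) = solutionSpace k n f h := by
  ext q
  simp [solutionSpace, ← smul_eq_C_mul, Submodule.smul_mem_iff _ hc]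

lemma mem_solutionSpace_of_concomitant_eq {q : K[X]} (hq : q ∈ degreeLT K n)
    (hqf : concomitant k h q = f) : q ∈ solutionSpace k n f h :=
  ⟨hq, Submodule.mem_span_singleton.2 ⟨1, by rw [one_smul, hqf]⟩⟩

variable [CharZero K]

lemma ker_concomitant_le_solutionSpace (hh : h ∈ degreeLT K k) (h0 : h ≠ 0) (hkn : k ≤ n) :
    LinearMap.ker (concomitant k h) ≤ solutionSpace k n f h :=
  le_inf ((ker_concomitant_le hh h0).trans (degreeLT_mono hkn)) (LinearMap.ker_le_comap _)

lemma exists_concomitant_eq (hh : h ∈ degreeLT K k) (h0 : h ≠ 0) (hg : g ∈ degreeLT K m)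
    (hgh : g * h = derivative f) :
    ∃ q ∈ degreeLT K (m + k), derivative^[k] q = g ∧ concomitant k h q = f := by
  obtain ⟨q, hq⟩ := derivative_surjective_of_charZero.iterate k g
  obtain ⟨c, hc⟩ : ∃ c, f - concomitant k h q = C c := by
    refine ⟨_, eq_C_of_derivative_eq_zero ?_⟩
    rw [derivative_sub, derivative_concomitant_of_mem_degreeLT hh, hq, ← hgh, mul_comm, sub_self]
  obtain ⟨u, hu, huc⟩ : C c ∈ (degreeLT K k).map (concomitant k h) := by
    rw [map_concomitant_degreeLT_eq hh h0]
    exact Submodule.mem_span_singleton.2 ⟨c, by rw [smul_eq_C_mul, mul_one]⟩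
  have hqu : derivative^[k] (q + u) = g := by
    rw [iterate_map_add, hq, iterate_derivative_eq_zero_iff.2 hu, add_zero]
  refine ⟨q + u, ?_, hqu, ?_⟩
  · rwa [← iterate_derivative_mem_degreeLT_iff, hqu]
  · rw [map_add, huc, ← hc, add_sub_cancel]

lemma finrank_solutionSpace (hh : h ∈ degreeLT K k) (h0 : h ≠ 0) (hg : g ∈ degreeLT K m)
    (hgh : g * h = derivative f) (hf : f ≠ 0) : finrank K (solutionSpace k (m + k) f h) = k := by
  have : FiniteDimensional K (solutionSpace k (m + k) f h) :=
    Submodule.finiteDimensional_of_le inf_le_left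
  have hmap : (solutionSpace k (m + k) f h).map (concomitant k h) = K ∙ f := by
    refine le_antisymm (Submodule.map_le_iff_le_comap.2 inf_le_right) ?_
    obtain ⟨q, hq, -, hqf⟩ := exists_concomitant_eq hh h0 hg hgh
    exact (Submodule.span_singleton_le_iff_mem _ _).2
      ⟨q, mem_solutionSpace_of_concomitant_eq hq hqf, hqf⟩
  rw [← finrank_map_add_finrank_inf_ker (concomitant k h), hmap, finrank_span_singleton hf,
    inf_eq_right.2 (ker_concomitant_le_solutionSpace hh h0 (Nat.le_add_left k m)),
    finrank_ker_concomitant hh h0]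

lemma solutionSpace_injective {g₁ g₂ h₁ h₂ : K[X]} (hm₁ : g₁.Monic) (hm₂ : g₂.Monic)
    (hg₁ : g₁ ∈ degreeLT K m) (hh₁ : h₁ ∈ degreeLT K k) (hh₂ : h₂ ∈ degreeLT K k)
    (hgh₁ : g₁ * h₁ = derivative f) (hgh₂ : g₂ * h₂ = derivative f) (hf : derivative f ≠ 0)
    (heq : solutionSpace k (m + k) f h₁ = solutionSpace k (m + k) f h₂) : g₁ = g₂ ∧ h₁ = h₂ := by
  have h₁0 : h₁ ≠ 0 := right_ne_zero_of_mul (hgh₁ ▸ hf)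
  have h₂0 : h₂ ≠ 0 := right_ne_zero_of_mul (hgh₂ ▸ hf)
  obtain ⟨q, hq, rfl, hqf⟩ := exists_concomitant_eq hh₁ h₁0 hg₁ hgh₁
  obtain ⟨c, hc⟩ := Submodule.mem_span_singleton.1
    (heq ▸ mem_solutionSpace_of_concomitant_eq hq hqf).2
  have hsmul : c • g₂ = derivative^[k] q := by
    refine mul_right_cancel₀ h₂0 ?_
    rw [smul_mul_assoc, hgh₂, ← derivative_smul, hc, derivative_concomitant_of_mem_degreeLT hh₂,
      mul_comm]
  have hc1 : c = 1 := by
    simpa [smul_eq_C_mul, hm₁.leadingCoeff, hm₂.leadingCoeff] using congrArg leadingCoeff hsmul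
  rw [hc1, one_smul] at hsmul
  subst hsmul
  exact ⟨rfl, mul_left_cancel₀ hm₂.ne_zero (hgh₁.trans hgh₂.symm)⟩

end SolutionSpace

section OsculatingSolution

variable {K ι : Type*} [Field K] {k m n : ℕ} {t : ι → K} {f g h : K[X]} {G : Submodule K K[X]}

/-- A solution of the osculating Schubert problem, transported to polynomials: the flag at infinity
becomes the filtration by degree, and meeting the osculating space `F_{n-k}(t i)` becomes containing
a nonzero polynomial that vanishes to order `k` at `t i`. -/
structure IsOsculatingSolution (k n : ℕ) (t : ι → K) (G : Submodule K K[X]) : Prop where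
  le_degreeLT : G ≤ degreeLT K n
  finrank_eq : finrank K G = k
  le_finrank_inf : ∀ i < k, i ≤ finrank K ↥(G ⊓ degreeLT K (i + 1))
  exists_pow_dvd : ∀ i, ∃ q ∈ G, q ≠ 0 ∧ (X - C (t i)) ^ k ∣ q

lemma isOsculatingSolution_solutionSpace [CharZero K] (hh : h ∈ degreeLT K k) (h0 : h ≠ 0)
    (hg : g ∈ degreeLT K m) (hgh : g * h = derivative f) (hf : f ≠ 0)
    (hroot : ∀ i, f.IsRoot (t i)) :
    IsOsculatingSolution k (m + k) t (solutionSpace k (m + k) f h) where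
  le_degreeLT := inf_le_left
  finrank_eq := finrank_solutionSpace hh h0 hg hgh hf
  le_finrank_inf i hi := (le_finrank_ker_concomitant_inf_degreeLT hh hi).trans <|
    have : FiniteDimensional K ↥(solutionSpace k (m + k) f h ⊓ degreeLT K (i + 1)) :=
      Submodule.finiteDimensional_of_le inf_le_right
    Submodule.finrank_mono <| inf_le_inf_right _ <|
      ker_concomitant_le_solutionSpace hh h0 (Nat.le_add_left k m)
  exists_pow_dvd i := by
    obtain ⟨q, hq, -, rfl⟩ := exists_concomitant_eq hh h0 hg hgh
    obtain ⟨p, hdvd, hqp, hp⟩ := exists_pow_dvd_concomitant_eq hh (hroot i)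
    have hpmem : p ∈ degreeLT K (m + k) :=
      (Submodule.sub_mem_iff_right _ hq).1 (degreeLT_mono (Nat.le_add_left k m) hqp)
    refine ⟨p, mem_solutionSpace_of_concomitant_eq hpmem hp, ?_, hdvd⟩
    rintro rfl
    exact hf (by rw [← hp, map_zero])

lemma IsOsculatingSolution.finrank_inf_degreeLT [Nonempty ι] (hG : IsOsculatingSolution k n t G)
    (hk : 0 < k) : 1 + finrank K ↥(G ⊓ degreeLT K k) = k := by
  have : FiniteDimensional K G := Submodule.finiteDimensional_of_le hG.le_degreeLT
  have hlower := hG.le_finrank_inf (k - 1) (by omega)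
  rw [Nat.sub_add_cancel hk] at hlower
  obtain ⟨q, hq, h0, hdvd⟩ := hG.exists_pow_dvd (Classical.arbitrary ι)
  have hlt : G ⊓ degreeLT K k < G :=
    inf_lt_left.2 fun hle => notMem_degreeLT_of_pow_dvd h0 hdvd (hle hq)
  have hupper := Submodule.finrank_lt_finrank_of_lt hlt
  rw [hG.finrank_eq] at hupper
  omega

lemma mem_span_nodal {s : Finset ι} (ht : Set.InjOn t s) {p : K[X]}
    (hdeg : p.natDegree ≤ s.card) (hroot : ∀ i ∈ s, p.IsRoot (t i)) :
    p ∈ K ∙ Lagrange.nodal s t := by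
  have hdvd : Lagrange.nodal s t ∣ p :=
    Finset.prod_dvd_of_coprime
      (fun i hi j hj hij =>
        isCoprime_X_sub_C_of_isUnit_sub (sub_ne_zero.2 (ht.ne hi hj hij)).isUnit)
      (fun i hi => dvd_iff_isRoot.2 (hroot i hi))
  rw [eq_leadingCoeff_mul_of_monic_of_dvd_of_natDegree_le Lagrange.nodal_monic hdvd
    (by rwa [Lagrange.natDegree_nodal]), ← smul_eq_C_mul]
  exact Submodule.smul_mem _ _ (Submodule.mem_span_singleton_self _)

variable [CharZero K] [Fintype ι] [Nonempty ι]

lemma IsOsculatingSolution.map_concomitant_eq (ht : t.Injective)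
    (hG : IsOsculatingSolution k (Fintype.card ι + 1) t G) (hk : 0 < k) (hh : h ∈ degreeLT K k)
    (h0 : h ≠ 0) (hker : LinearMap.ker (concomitant k h) = G ⊓ degreeLT K k) :
    G.map (concomitant k h) = K ∙ Lagrange.nodal Finset.univ t := by
  have : FiniteDimensional K G := Submodule.finiteDimensional_of_le hG.le_degreeLT
  have hrank : finrank K (G.map (concomitant k h)) = 1 := by
    have hsum := finrank_map_add_finrank_inf_ker (concomitant k h) G
    have hinf := hG.finrank_inf_degreeLT hk
    rw [hker, inf_left_idem, hG.finrank_eq] at hsum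
    omega
  refine Submodule.eq_of_le_of_finrank_eq ?_
    (by rw [hrank, finrank_span_singleton Lagrange.nodal_ne_zero])
  rintro _ ⟨q, hq, rfl⟩
  have hdeg : q.natDegree ≤ Fintype.card ι :=
    natDegree_le_iff_degree_le.2 <| by
      simpa [degreeLT_succ_eq_degreeLE, mem_degreeLE] using hG.le_degreeLT hq
  have hhdeg := (natDegree_lt_iff_degree_lt h0).2 (mem_degreeLT.1 hh)
  refine mem_span_nodal ht.injOn ((natDegree_concomitant_le hhdeg q).trans hdeg) fun i _ => ?_
  obtain ⟨r, hr, hr0, hdvd⟩ := hG.exists_pow_dvd i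
  have hTr : concomitant k h r ≠ 0 := fun hz =>
    notMem_degreeLT_of_pow_dvd hr0 hdvd (hker.le hz).2
  have hspan := eq_span_singleton_of_mem_of_finrank_eq_one hrank (Submodule.mem_map_of_mem hr) hTr
  obtain ⟨c, hc⟩ := Submodule.mem_span_singleton.1 (hspan.le (Submodule.mem_map_of_mem hq))
  rw [← hc, IsRoot, eval_smul, eval_concomitant_of_pow_dvd hdvd, smul_zero]

lemma IsOsculatingSolution.exists_eq_solutionSpace (ht : t.Injective)
    (hG : IsOsculatingSolution k (m + k) t G) (hk : 0 < k) (hmk : m + k = Fintype.card ι + 1) :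
    ∃ g ∈ degreeLT K m, ∃ h ∈ degreeLT K k,
      g * h = derivative (Lagrange.nodal Finset.univ t) ∧
      solutionSpace k (m + k) (Lagrange.nodal Finset.univ t) h = G := by
  set f := Lagrange.nodal Finset.univ t
  obtain ⟨h, hh, h0, hker⟩ := exists_ker_concomitant_eq inf_le_right (hG.finrank_inf_degreeLT hk)
  have hmap : G.map (concomitant k h) = K ∙ f :=
    (hmk ▸ hG).map_concomitant_eq ht hk hh h0 hker
  obtain ⟨q, hq, hqf⟩ := hmap.ge (Submodule.mem_span_singleton_self f)
  have hgh : derivative^[k] q * h = derivative f := by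
    rw [← hqf, derivative_concomitant_of_mem_degreeLT hh, mul_comm]
  have hg : derivative^[k] q ∈ degreeLT K m :=
    iterate_derivative_mem_degreeLT_iff.2 (hG.le_degreeLT hq)
  have : FiniteDimensional K (solutionSpace k (m + k) f h) :=
    Submodule.finiteDimensional_of_le inf_le_left
  refine ⟨_, hg, h, hh, hgh, (Submodule.eq_of_le_of_finrank_eq ?_ ?_).symm⟩
  · exact le_inf hG.le_degreeLT (Submodule.map_le_iff_le_comap.1 hmap.le)
  · rw [hG.finrank_eq, finrank_solutionSpace hh h0 hg hgh Lagrange.nodal_ne_zero]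

end OsculatingSolution

section Factorization

variable {K ι : Type*} [Field K] {k m : ℕ}

/-- The factorizations `(g, h)` of `p` with `g` monic of degree `m - 1` and `h` of degree `k - 1`;
making `g` monic picks one representative of each factorization up to scalars. -/
def monicFactorizations (m k : ℕ) (p : K[X]) : Set (K[X] × K[X]) :=
  {gh | gh.1.Monic ∧ gh.1.degree = (m - 1 : ℕ) ∧ gh.2.degree = (k - 1 : ℕ) ∧ gh.1 * gh.2 = p}

lemma mem_monicFactorizations_of_mul_eq {g h p : K[X]} (hg : g ∈ degreeLT K m)
    (hh : h ∈ degreeLT K k) (hgh : g * h = p) (hp : p ≠ 0) (hdeg : m + k ≤ p.natDegree + 2) :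
    (C g.leadingCoeff⁻¹ * g, C g.leadingCoeff * h) ∈ monicFactorizations m k p := by
  have hg0 : g ≠ 0 := left_ne_zero_of_mul (hgh ▸ hp)
  have hh0 : h ≠ 0 := right_ne_zero_of_mul (hgh ▸ hp)
  have hlc : g.leadingCoeff ≠ 0 := leadingCoeff_ne_zero.2 hg0
  have hgdeg := (natDegree_lt_iff_degree_lt hg0).2 (mem_degreeLT.1 hg)
  have hhdeg := (natDegree_lt_iff_degree_lt hh0).2 (mem_degreeLT.1 hh)
  have hsum : p.natDegree = g.natDegree + h.natDegree := by rw [← hgh, natDegree_mul hg0 hh0]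
  refine ⟨?_, ?_, ?_, ?_⟩
  · rw [mul_comm]
    exact monic_mul_leadingCoeff_inv hg0
  · rw [degree_C_mul (inv_ne_zero hlc), degree_eq_iff_natDegree_eq hg0]
    omega
  · rw [degree_C_mul hlc, degree_eq_iff_natDegree_eq hh0]
    omega
  · rw [mul_mul_mul_comm, ← C_mul, inv_mul_cancel₀ hlc, C_1, one_mul, hgh]

lemma bijOn_solutionSpace [CharZero K] [Fintype ι] [Nonempty ι] {t : ι → K} (ht : t.Injective)
    (hm : 0 < m) (hk : 0 < k) (hmk : m + k = Fintype.card ι + 1) :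
    Set.BijOn (fun gh => solutionSpace k (m + k) (Lagrange.nodal Finset.univ t) gh.2)
      (monicFactorizations m k (derivative (Lagrange.nodal Finset.univ t)))
      {G | IsOsculatingSolution k (m + k) t G} := by
  set f := Lagrange.nodal Finset.univ t
  have hf : f.natDegree = Fintype.card ι := Lagrange.natDegree_nodal
  have hf' : derivative f ≠ 0 := by
    rw [Ne, derivative_eq_zero, hf]
    exact Fintype.card_ne_zero
  refine ⟨?_, ?_, ?_⟩
  · rintro ⟨g, h⟩ ⟨-, hg, hh, hgh⟩
    exact isOsculatingSolution_solutionSpace (mem_degreeLT_of_degree_eq_pred hk hh)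
      (right_ne_zero_of_mul (hgh ▸ hf')) (mem_degreeLT_of_degree_eq_pred hm hg) hgh
      Lagrange.nodal_ne_zero fun i => Lagrange.eval_nodal_at_node (Finset.mem_univ i)
  · rintro ⟨g₁, h₁⟩ ⟨hm₁, hg₁, hh₁, hgh₁⟩ ⟨g₂, h₂⟩ ⟨hm₂, -, hh₂, hgh₂⟩ heq
    exact Prod.ext_iff.2 <| solutionSpace_injective hm₁ hm₂ (mem_degreeLT_of_degree_eq_pred hm hg₁)
      (mem_degreeLT_of_degree_eq_pred hk hh₁) (mem_degreeLT_of_degree_eq_pred hk hh₂)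
      hgh₁ hgh₂ hf' heq
  · intro G hG
    obtain ⟨g, hg, h, hh, hgh, rfl⟩ := hG.exists_eq_solutionSpace ht hk hmk
    have hdeg : m + k ≤ (derivative f).natDegree + 2 := by
      rw [natDegree_derivative, hf]
      omega
    exact ⟨_, mem_monicFactorizations_of_mul_eq hg hh hgh hf' hdeg, solutionSpace_C_mul <|
      leadingCoeff_ne_zero.2 (left_ne_zero_of_mul (hgh ▸ hf'))⟩

end Factorization

section Flags

variable {K : Type*} [Field K]

/-- The `m`-th derivative at `s` of the rational normal curve `γ(s) = (1, s, …, s^{n-1}/(n-1)!)`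
over `K`. -/
noncomputable def rationalNormalCurveDeriv (n m : ℕ) (s : K) : Fin n → K :=
  fun i => eval s (derivative^[m] (C ((Nat.factorial i : K))⁻¹ * X ^ (i : ℕ)))

/-- The `i`-th member `F_i(s)` of the flag osculating the rational normal curve at `γ(s)`. -/
noncomputable def osculatingFlag (n i : ℕ) (s : K) : Submodule K (Fin n → K) :=
  Submodule.span K (Set.range fun m : Fin i => rationalNormalCurveDeriv n m s)

variable (K) in
/-- The `i`-th member `F_i(∞)` of the flag at infinity, spanned by the last `i` standard basis
vectors and encoded by the vanishing of the other coordinates. -/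
noncomputable def flagAtInfinity (n i : ℕ) : Submodule K (Fin n → K) :=
  Submodule.pi Set.univ fun j : Fin n => if (j : ℕ) + i < n then ⊥ else ⊤

/-- The identification of `Kⁿ` with polynomials of degree less than `n` that sends `v` to
`∑ i, (-1)^i v_i X^(n-1-i) / (n-1-i)!`; the coefficients are chosen so that the rational normal
curve `γ(s)` goes to `(X - s)^(n-1) / (n-1)!`. -/
noncomputable def toPolynomial (n : ℕ) : (Fin n → K) →ₗ[K] K[X] :=
  ∑ i : Fin n, ((-1) ^ (i : ℕ) * (Nat.factorial i.rev : K)⁻¹) •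
    monomial (i.rev : ℕ) ∘ₗ LinearMap.proj i

lemma coeff_toPolynomial {n : ℕ} (v : Fin n → K) (i : Fin n) :
    (toPolynomial n v).coeff i.rev = (-1) ^ (i : ℕ) * (Nat.factorial i.rev : K)⁻¹ * v i := by
  simp [toPolynomial, coeff_monomial, Fin.val_inj, -Fin.val_rev]

lemma toPolynomial_mem_degreeLT {n : ℕ} (v : Fin n → K) : toPolynomial n v ∈ degreeLT K n := by
  rw [toPolynomial, LinearMap.sum_apply]
  refine Submodule.sum_mem _ fun i _ => Submodule.smul_mem _ _ ?_
  exact mem_degreeLT.2 ((degree_monomial_le _ _).trans_lt (Nat.cast_lt.2 i.rev.is_lt))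

variable [CharZero K]

lemma toPolynomial_mem_degreeLT_iff {n i : ℕ} {v : Fin n → K} :
    toPolynomial n v ∈ degreeLT K i ↔ v ∈ flagAtInfinity K n i := by
  rw [mem_degreeLT_iff_of_mem_degreeLT (toPolynomial_mem_degreeLT v), flagAtInfinity,
    Submodule.mem_pi]
  refine forall_congr' fun j => ?_
  rw [coeff_toPolynomial]
  split_ifs with hj <;> simp [hj, Nat.factorial_ne_zero]

lemma toPolynomial_injective (n : ℕ) :
    Function.Injective (toPolynomial n : (Fin n → K) →ₗ[K] K[X]) := by
  refine (injective_iff_map_eq_zero _).2 fun v hv => funext fun i => ?_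
  simpa [hv, Nat.factorial_ne_zero] using (coeff_toPolynomial v i).symm

lemma range_toPolynomial (n : ℕ) :
    LinearMap.range (toPolynomial n : (Fin n → K) →ₗ[K] K[X]) = degreeLT K n := by
  refine Submodule.eq_of_le_of_finrank_eq ?_ ?_
  · rintro _ ⟨v, rfl⟩
    exact toPolynomial_mem_degreeLT v
  · rw [LinearMap.finrank_range_of_inj (toPolynomial_injective n), finrank_degreeLT,
      finrank_fin_fun]

lemma rationalNormalCurveDeriv_apply {n m : ℕ} (s : K) (i : Fin n) :
    rationalNormalCurveDeriv n m s i =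
      if m ≤ i then s ^ (i - m : ℕ) / Nat.factorial (i - m) else 0 := by
  rw [rationalNormalCurveDeriv, iterate_derivative_C_mul, iterate_derivative_X_pow_eq_natCast_mul]
  split_ifs with h
  · have hfac : (Nat.factorial i : K) = Nat.factorial (i - m) * Nat.descFactorial i m := by
      rw [← Nat.factorial_mul_descFactorial h, Nat.cast_mul]
    have hfac0 : (Nat.factorial (i - m) : K) ≠ 0 := by simp [Nat.factorial_ne_zero]
    have hdesc0 : (Nat.descFactorial i m : K) ≠ 0 := by simp [Nat.descFactorial_eq_zero_iff_lt, h]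
    simp only [hfac, mul_inv_rev, map_mul, eval_mul, eval_C, eval_natCast, eval_pow, eval_X]
    field_simp
  · simp [Nat.descFactorial_eq_zero_iff_lt.2 (not_le.1 h)]

lemma toPolynomial_rationalNormalCurveDeriv {n : ℕ} (j : Fin n) (s : K) :
    toPolynomial n (rationalNormalCurveDeriv n j s) =
      ((-1) ^ (j : ℕ) * (Nat.factorial j.rev : K)⁻¹) • (X - C s) ^ (j.rev : ℕ) := by
  have hpow : (X - C s) ^ (j.rev : ℕ) ∈ degreeLT K n := by
    rw [mem_degreeLT, degree_X_sub_C_pow]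
    exact Nat.cast_lt.2 j.rev.is_lt
  refine eq_of_coeff_rev_eq (toPolynomial_mem_degreeLT _) (Submodule.smul_mem _ _ hpow) fun i => ?_
  rw [coeff_toPolynomial, rationalNormalCurveDeriv_apply, coeff_smul,
    sub_eq_add_neg, ← C_neg, coeff_X_add_C_pow]
  split_ifs with hji
  · obtain ⟨b, hb⟩ := Nat.exists_eq_add_of_le hji
    have hrev : (j.rev : ℕ) = i.rev + b := by
      simp only [Fin.val_rev]
      omega
    have hfac (a : ℕ) : (Nat.factorial a : K) ≠ 0 := Nat.cast_ne_zero.2 a.factorial_ne_zero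
    rw [hrev, Nat.cast_add_choose, hb, Nat.add_sub_cancel_left, Nat.add_sub_cancel_left,
      neg_pow s, pow_add, smul_eq_mul]
    field_simp [hfac]
  · rw [Nat.choose_eq_zero_of_lt (by simp only [Fin.val_rev]; omega)]
    simp

lemma map_toPolynomial_osculatingFlag (m k : ℕ) (s : K) :
    (osculatingFlag (m + k) m s).map (toPolynomial (m + k)) =
      (degreeLT K m).map (LinearMap.mulLeft K ((X - C s) ^ k)) := by
  have hcurve (j : Fin m) : toPolynomial (m + k) (rationalNormalCurveDeriv (m + k) j s) =
      ((-1) ^ (j : ℕ) * (Nat.factorial (j.rev + k) : K)⁻¹) •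
        ((X - C s) ^ k * (X - C s) ^ (j.rev : ℕ)) := by
    rw [← pow_add, add_comm k]
    simpa [Fin.rev_castAdd] using toPolynomial_rationalNormalCurveDeriv (Fin.castAdd k j) s
  rw [osculatingFlag, ← span_X_sub_C_pow m s, Submodule.map_span, Submodule.map_span]
  apply le_antisymm <;> rw [Submodule.span_le]
  · rintro _ ⟨_, ⟨j, rfl⟩, rfl⟩
    dsimp only
    rw [hcurve]
    exact Submodule.smul_mem _ _ (Submodule.subset_span ⟨_, ⟨j.rev, j.rev.is_lt, rfl⟩, rfl⟩)
  · rintro _ ⟨_, ⟨i, hi, rfl⟩, rfl⟩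
    have hmem := Submodule.mem_map_of_mem (f := toPolynomial (m + k)) <|
      Submodule.subset_span (R := K) (Set.mem_range_self
        (f := fun j : Fin m => rationalNormalCurveDeriv (m + k) j s) (Fin.rev ⟨i, hi⟩))
    rw [Submodule.map_span, hcurve, Fin.rev_rev, Submodule.smul_mem_iff _ (by
      simp [Nat.factorial_ne_zero])] at hmem
    exact hmem

lemma pow_dvd_toPolynomial_iff {m k : ℕ} {s : K} {v : Fin (m + k) → K} :
    (X - C s) ^ k ∣ toPolynomial (m + k) v ↔ v ∈ osculatingFlag (m + k) m s := by
  rw [← Submodule.comap_map_eq_of_injective (toPolynomial_injective (m + k)) (osculatingFlag _ _ _),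
    Submodule.mem_comap, map_toPolynomial_osculatingFlag]
  refine ⟨fun ⟨r, hr⟩ => ⟨r, ?_, hr.symm⟩, fun ⟨r, _, hr⟩ => ⟨r, hr.symm⟩⟩
  have hdeg := mem_degreeLT.1 (toPolynomial_mem_degreeLT v)
  rw [hr, degree_mul, degree_X_sub_C_pow] at hdeg
  exact mem_degreeLT.2 (lt_of_add_lt_add_left (hdeg.trans_eq (by rw [Nat.cast_add, add_comm])))

/-- The solutions of the osculating instance of the Schubert problem `(□_{k,n}, □^{n-1})`: the
`k`-dimensional subspaces of `Kⁿ` meeting the flag at infinity and the spaces `F_{n-k}(t i)` as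
prescribed. -/
def osculatingSolutions {ι : Type*} (k n : ℕ) (t : ι → K) : Set (Submodule K (Fin n → K)) :=
  {H | finrank K H = k ∧
    (∀ i : ℕ, 1 ≤ i → i ≤ k - 1 → i ≤ finrank K ↥(H ⊓ flagAtInfinity K n (i + 1))) ∧
    ∀ i, H ⊓ osculatingFlag n (n - k) (t i) ≠ ⊥}

lemma map_toPolynomial_inf_degreeLT {n : ℕ} (H : Submodule K (Fin n → K)) (i : ℕ) :
    H.map (toPolynomial n) ⊓ degreeLT K i = (H ⊓ flagAtInfinity K n i).map (toPolynomial n) := by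
  have hcomap : (degreeLT K i).comap (toPolynomial n) = flagAtInfinity K n i :=
    Submodule.ext fun _ => toPolynomial_mem_degreeLT_iff
  rw [Submodule.map_inf_eq_map_inf_comap, hcomap]

lemma exists_mem_map_toPolynomial_pow_dvd_iff {m k : ℕ} {s : K}
    {H : Submodule K (Fin (m + k) → K)} :
    (∃ q ∈ H.map (toPolynomial (m + k)), q ≠ 0 ∧ (X - C s) ^ k ∣ q) ↔
      H ⊓ osculatingFlag (m + k) m s ≠ ⊥ := by
  simp [Submodule.ne_bot_iff, pow_dvd_toPolynomial_iff, and_assoc, and_comm,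
    map_eq_zero_iff _ (toPolynomial_injective (K := K) (m + k))]

lemma isOsculatingSolution_map_toPolynomial_iff {ι : Type*} {m k : ℕ} {t : ι → K}
    {H : Submodule K (Fin (m + k) → K)} :
    IsOsculatingSolution k (m + k) t (H.map (toPolynomial (m + k))) ↔
      H ∈ osculatingSolutions k (m + k) t := by
  have hfinrank (S : Submodule K (Fin (m + k) → K)) :
      finrank K (S.map (toPolynomial (m + k))) = finrank K S :=
    (Submodule.equivMapOfInjective _ (toPolynomial_injective _) S).finrank_eq.symm
  have hfinrank_inf (i : ℕ) : finrank K ↥(H.map (toPolynomial (m + k)) ⊓ degreeLT K i) =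
      finrank K ↥(H ⊓ flagAtInfinity K (m + k) i) := by
    rw [map_toPolynomial_inf_degreeLT, hfinrank]
  simp only [osculatingSolutions, Set.mem_ofPred_eq, Nat.add_sub_cancel,
    ← exists_mem_map_toPolynomial_pow_dvd_iff, ← hfinrank H, ← hfinrank_inf]
  constructor
  · rintro ⟨-, hrank, hinf, hdvd⟩
    exact ⟨hrank, fun i hi hik => hinf i (by omega), hdvd⟩
  · rintro ⟨hrank, hinf, hdvd⟩
    refine ⟨?_, hrank, fun i hi => ?_, hdvd⟩
    · rw [← range_toPolynomial]
      exact LinearMap.map_le_range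
    · rcases i.eq_zero_or_pos with rfl | hi0
      · exact Nat.zero_le _
      · exact hinf i hi0 (by omega)

lemma bijOn_map_toPolynomial {ι : Type*} (m k : ℕ) (t : ι → K) :
    Set.BijOn (Submodule.map (toPolynomial (m + k))) (osculatingSolutions k (m + k) t)
      {G | IsOsculatingSolution k (m + k) t G} := by
  refine ⟨fun H hH => isOsculatingSolution_map_toPolynomial_iff.2 hH,
    (Submodule.map_injective_of_injective (toPolynomial_injective _)).injOn, fun G hG => ?_⟩
  have hmap : (G.comap (toPolynomial (m + k))).map (toPolynomial (m + k)) = G :=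
    Submodule.map_comap_eq_self (range_toPolynomial (K := K) (m + k) ▸ hG.le_degreeLT)
  exact ⟨_, isOsculatingSolution_map_toPolynomial_iff.1 (hmap.symm ▸ hG), hmap⟩

end Flags

theorem factorization_bijection_general {K : Type*} [Field K] [CharZero K] (k n : ℕ) (hk : 1 ≤ k)
    (hkn : k ≤ n - 1) (t : Fin (n - 1) → K) (ht : Function.Injective t) :
    Nonempty (osculatingSolutions k n t ≃
      monicFactorizations (n - k) k (derivative (∏ i, (X - C (t i))))) := by
  obtain ⟨m, rfl⟩ := Nat.exists_eq_add_of_le' (show k ≤ n by omega)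
  have : Nonempty (Fin (m + k - 1)) := ⟨⟨0, by omega⟩⟩
  have hfactor := bijOn_solutionSpace ht (m := m) (by omega) hk (by rw [Fintype.card_fin]; omega)
  rw [Nat.add_sub_cancel, ← Lagrange.nodal_eq]
  exact ⟨(bijOn_map_toPolynomial m k t).equiv.trans hfactor.equiv.symm⟩

/-- **Solutions of the osculating instance of `(□_{k,n}, □^{n−1})` are factorizations.**
For distinct complex numbers `t₁, …, t_{n−1}` and `f(t) = ∏ (t − t_i)`, the set of
`k`-dimensional subspaces `H ⊆ ℂⁿ` with `dim(H ∩ F_{i+1}(∞)) ≥ i` for `1 ≤ i ≤ k−1`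
and `H ∩ F_{n−k}(t_i) ≠ 0` for all `i` is in bijection with the pairs `(g, h)` with
`g` monic of degree `n−k−1`, `deg h = k−1` and `g·h = f′`. -/
theorem factorization_bijection (k n : ℕ) (hk : 1 ≤ k) (hkn : k ≤ n - 1)
    (t : Fin (n - 1) → ℂ) (ht : Function.Injective t) :
    Nonempty (
      {H : Submodule ℂ (Fin n → ℂ) //
          Module.finrank ℂ H = k ∧
          (∀ i : ℕ, 1 ≤ i → i ≤ k - 1 →
            i ≤ Module.finrank ℂ ↥(H ⊓ infFlag n (i + 1))) ∧
          (∀ i : Fin (n - 1), H ⊓ oscFlag n (n - k) (t i) ≠ ⊥)} ≃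
      {gh : Polynomial ℂ × Polynomial ℂ //
          gh.1.Monic ∧ gh.1.degree = (n - k - 1 : ℕ) ∧ gh.2.degree = (k - 1 : ℕ) ∧
          gh.1 * gh.2 =
            Polynomial.derivative (∏ i, (Polynomial.X - Polynomial.C (t i)))}) :=
  factorization_bijection_general k n hk hkn t ht
end

section
/- Fix 1 ≤ k < n. Let f₀ ∈ ℂ, let g₀,…,g_{n−k−2} ∈ ℂ with g_{n−k−1} := 1, and let h₀,…,h_{k−2} ∈ ℂ∖{0} with h_{k−1} := 1. Let A be the k×n matrix whose first row is (c₁ g_{n−k−1}, c₂ g_{n−k−2}, …, c_{n−k} g₀, f₀/h₀, 0, …, 0), where c_m := (−1)^{n−k−m+1}(n−k−m)! for 1 ≤ m ≤ n−k, and whose i-th row, for 2 ≤ i ≤ k, has entry −(i−1) in column n−k+i−1, entry h_{i−2}/h_{i−1} in column n−k+i, and 0 in all other columns. Let B(t) be the (n−k)×n matrix whose m-th row is γ^{(m−1)}(t) for m = 1,…,n−k. Then, as polynomials in t, the determinant of the n×n matrix with A stacked on top of B(t) equals (−1)^{k(n−k)} ( Σ_{i=0}^{n−k−1} Σ_{j=0}^{k−1}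 (g_i h_j / (i+j+1)) t^{i+j+1} + f₀ ). [Lemma 4 (the determinant computation underlying the factorization theorem).] -/
/-!
The first row of `A` is linear in `G(u) = ∑ gᵢ uⁱ`, and its remaining rows are bidiagonal with
kernel spanned by the vector with entries `s! hₛ`, which encodes `H(u) = ∑ hⱼ uʲ`.  In the last `k`
columns the osculating matrix has the entries of the derivatives of `t^{d+s}/(d+s)!`, `d = n - k`,
and by Taylor's formula with integral remainder these are combinations of its first `d` columns with
coefficients `∫₀ᵗ (-u)^{d-1-a}/(d-1-a)! · uˢ/s! du`.  Clearing those columns by column operations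
adds `∑ gᵢ ∫₀ᵗ uⁱ uˢ/s! du` to the entries of the first row of `A`, so that the determinant becomes
`f₀ + ∫₀ᵗ G(u) H(u) du` up to the sign of the exchange of the two groups of columns.
-/

open Matrix Finset
open scoped Nat

section Determinants

variable {R : Type*} [CommRing R]

theorem det_fromBlocks_mul₂₁ {m n : Type*} [Fintype m] [Fintype n] [DecidableEq m] [DecidableEq n]
    (A : Matrix m m R) (B : Matrix m n R) (D : Matrix n n R) (W : Matrix n m R) :
    (fromBlocks A B (D * W) D).det = (A - B * W).det * D.det := by
  have hfactor : fromBlocks A B (D * W) D = fromBlocks (A - B * W) B 0 D * fromBlocks 1 0 W 1 := by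
    simp [fromBlocks_multiply]
  rw [hfactor, det_mul, det_fromBlocks_zero₂₁, det_fromBlocks_zero₁₂, det_one, det_one, one_mul,
    mul_one]

theorem val_finRotate_pow_apply (n d : ℕ) (i : Fin n) :
    ((finRotate n ^ d) i : ℕ) = (i + d) % n := by
  cases n with
  | zero => exact i.elim0
  | succ n =>
    induction d with
    | zero => simp [Nat.mod_eq_of_lt i.isLt]
    | succ d ih =>
      rw [pow_succ', Equiv.Perm.mul_apply, finRotate_apply, Fin.val_add, ih, Fin.val_one',
        Nat.add_mod_mod, Nat.mod_add_mod, add_assoc]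

theorem sign_finRotate_add_pow (d k : ℕ) :
    Equiv.Perm.sign (finRotate (d + k) ^ d) = (-1) ^ (k * d) := by
  rw [map_pow, sign_finRotate, ← pow_mul]
  cases d with
  | zero => rfl
  | succ d =>
    rw [show d + 1 + k - 1 = k + d by omega, add_mul, pow_add,
      (Nat.even_mul_succ_self d).neg_one_pow, mul_one]

theorem det_submatrix_finSumFinEquiv_symm {k d : ℕ}
    (M : Matrix (Fin k ⊕ Fin d) (Fin (d + k)) R) :
    (M.submatrix (finSumFinEquiv.trans (finCongr (add_comm k d))).symm id).det =
      (-1) ^ (k * d) * (M.submatrix id (Sum.elim (Fin.natAdd d) (Fin.castAdd k))).det := by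
  set e := finSumFinEquiv.trans (finCongr (add_comm k d)) with he
  set σ := finRotate (d + k) ^ d with hσ
  have hcolumns : Sum.elim (Fin.natAdd d) (Fin.castAdd k) = σ ∘ e := by
    ext (s | a)
    · have hs : (s : ℕ) + d < d + k := by omega
      simp [he, hσ, val_finRotate_pow_apply, Nat.mod_eq_of_lt hs, Nat.add_comm d s]
    · have ha : (a : ℕ) + k + d = a + (d + k) := by omega
      have ha' : (a : ℕ) < d + k := by omega
      simp [he, hσ, val_finRotate_pow_apply, ha, Nat.mod_eq_of_lt ha']
  have hreindex : (M.submatrix id (σ ∘ e)).det =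
      ((M.submatrix e.symm id).submatrix id σ).det := by
    rw [← det_submatrix_equiv_self e]
    simp only [submatrix_submatrix, Equiv.symm_comp_self, Function.id_comp, Function.comp_id]
  rw [hcolumns, hreindex, det_permute', sign_finRotate_add_pow]
  push_cast
  rw [← mul_assoc, ← mul_pow, neg_one_mul, neg_neg, one_pow, one_mul]

/-- The square matrix with first row `x` whose row `r ≥ 1` has entries `-a r` and `b r` in the
columns `r - 1` and `r`; the parameters are indexed by natural numbers so that the size can vary. -/
def borderedBidiagonal (k : ℕ) (x a b : ℕ → R) : Matrix (Fin (k + 1)) (Fin (k + 1)) R :=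
  of fun r s =>
    if (r : ℕ) = 0 then x s
    else if (s : ℕ) + 1 = r then -a r
    else if (s : ℕ) = r then b r
    else 0

theorem det_borderedBidiagonal_zero (x a b : ℕ → R) : (borderedBidiagonal 0 x a b).det = x 0 := by
  simp [borderedBidiagonal]

theorem det_borderedBidiagonal_succ (k : ℕ) (x a b : ℕ → R) :
    (borderedBidiagonal (k + 1) x a b).det =
      b (k + 1) * (borderedBidiagonal k x a b).det +
        x (k + 1) * ∏ r ∈ range (k + 1), a (r + 1) := by
  set M := borderedBidiagonal (k + 1) x a b with hM
  have hcorner : M.submatrix Fin.castSucc Fin.castSucc = borderedBidiagonal k x a b := by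
    ext r s
    simp [hM, borderedBidiagonal]
  have hminor : (M.submatrix Fin.succ Fin.castSucc).det =
      (-1) ^ (k + 1) * ∏ r ∈ range (k + 1), a (r + 1) := by
    rw [det_of_isUpperTriangular, ← Fin.prod_univ_eq_prod_range fun r => a (r + 1)]
    · simp [hM, borderedBidiagonal, prod_neg]
    · intro r s hsr
      have hsr : (s : ℕ) < r := hsr
      simp [hM, borderedBidiagonal, hsr.ne, show (s : ℕ) ≠ r + 1 by omega]
  have hmiddle : ∀ r : Fin k, M r.succ.castSucc (Fin.last (k + 1)) = 0 := by
    intro r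
    simp [hM, borderedBidiagonal, show k + 1 ≠ r by omega, show k ≠ r by omega]
  rw [det_succ_column M (Fin.last (k + 1)), Fin.sum_univ_castSucc, Fin.sum_univ_succ]
  simp only [hmiddle, Fin.castSucc_zero, Fin.succAbove_last, Fin.succAbove_zero, hcorner, hminor]
  have hsq : ((-1 : R) ^ (k + 1)) * (-1) ^ (k + 1) = 1 := by
    rw [← mul_pow]
    simp
  have htop : M 0 (Fin.last (k + 1)) = x (k + 1) := by simp [hM, borderedBidiagonal]
  have hlast : M (Fin.last (k + 1)) (Fin.last (k + 1)) = b (k + 1) := by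
    simp [hM, borderedBidiagonal]
  simp only [htop, hlast, Fin.val_zero, Fin.val_last, zero_add, mul_zero, zero_mul, sum_const_zero,
    add_zero, (Even.add_self (k + 1)).neg_one_pow, one_mul]
  linear_combination (x (k + 1) * ∏ r ∈ range (k + 1), a (r + 1)) * hsq

end Determinants

section Field

variable {K : Type*} [Field K]

theorem det_borderedBidiagonal_ratio (k : ℕ) (x a h : ℕ → K) (hne : ∀ j ≤ k, h j ≠ 0) :
    (borderedBidiagonal k x a fun r => h (r - 1) / h r).det =
      (∑ s ∈ range (k + 1), x s * (∏ r ∈ range s, a (r + 1)) * h s) / h k := by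
  induction k with
  | zero => simp [-det_unique, det_borderedBidiagonal_zero, hne 0 le_rfl]
  | succ k ih =>
    have hk := hne k k.le_succ
    have hk' := hne (k + 1) le_rfl
    rw [det_borderedBidiagonal_succ, ih fun j hj => hne j (hj.trans k.le_succ),
      sum_range_succ _ (k + 1), Nat.add_sub_cancel]
    field_simp

/-- The value at `t` of the `m`-th derivative of the coordinate `t ^ j / j!` of the rational normal
curve, over any field; over `ℂ` it is by definition the entry `j` of `gammaVec n m t`. -/
noncomputable def osculatingEntry (m j : ℕ) (t : K) : K :=
  Polynomial.eval t
    (Polynomial.derivative^[m] (Polynomial.C (j ! : K)⁻¹ * Polynomial.X ^ j))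

/-- The matrix whose rows are the rational normal curve in `Kⁿ` and its first `m - 1` derivatives
at `t`, so that its row space is an osculating space of the curve. -/
noncomputable def osculatingMatrix (m n : ℕ) (t : K) : Matrix (Fin m) (Fin n) K :=
  of fun i j => osculatingEntry i j t

/-- The integral `∫₀ᵗ (-u)ⁱ / i! · uˢ / s! du`, in closed form. -/
noncomputable def remainderCoeff (i s : ℕ) (t : K) : K :=
  (-1) ^ i * t ^ (i + s + 1) / (i ! * s ! * (i + s + 1 : ℕ))

/-- The coefficients that express the columns `d, …, d + k - 1` of the osculating matrix with `d`
rows through its first `d` columns; row `a` uses the integral with index `i = d - 1 - a`. -/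
noncomputable def remainderMatrix (d k : ℕ) (t : K) : Matrix (Fin d) (Fin k) K :=
  of fun a s => remainderCoeff a.rev s t

/-- The `k × n` matrix with first row
`((-1)^d (d-1)! g_{d-1}, …, (-1)^1 0! g₀, f₀ / h₀, 0, …, 0)` and, in each row `r ≥ 1`, the entries
`-r` and `h_{r-1} / h_r` in the columns `d + r - 1` and `d + r`; it parametrizes a Schubert cell
when `k + d = n`. -/
noncomputable def schubertCellMatrix (k d n : ℕ) (f₀ : K) (g h : ℕ → K) :
    Matrix (Fin k) (Fin n) K :=
  of fun r j =>
    if (r : ℕ) = 0 then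
      (if (j : ℕ) < d then (-1) ^ (d - (j : ℕ)) * ((d - 1 - (j : ℕ))! : K) * g (d - 1 - (j : ℕ))
        else if (j : ℕ) = d then f₀ / h 0 else 0)
    else
      (if (j : ℕ) = d + (r : ℕ) - 1 then -((r : ℕ) : K)
        else if (j : ℕ) = d + (r : ℕ) then h ((r : ℕ) - 1) / h (r : ℕ)
        else 0)

/-- The first row of the Schubert cell matrix in the columns `d, d + 1, …` once the first `d`
columns of the osculating matrix have been used to clear the rest of that matrix. -/
noncomputable def reducedFirstRow (d : ℕ) (f₀ : K) (g h : ℕ → K) (t : K) (s : ℕ) : K :=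
  (if s = 0 then f₀ / h 0 else 0) + ∑ i ∈ range d, (-1) ^ i * i ! * g i * remainderCoeff i s t

theorem osculatingEntry_of_lt {m j : ℕ} (hjm : j < m) (t : K) : osculatingEntry m j t = 0 := by
  rw [osculatingEntry, Polynomial.iterate_derivative_C_mul,
    Polynomial.iterate_derivative_X_pow_eq_C_mul, Nat.descFactorial_of_lt hjm]
  simp

theorem schubertCellMatrix_sub_mul_remainderMatrix (k d : ℕ) (f₀ t : K) (g h : ℕ → K) :
    (schubertCellMatrix (k + 1) d (d + (k + 1)) f₀ g h).submatrix id (Fin.natAdd d) -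
        (schubertCellMatrix (k + 1) d (d + (k + 1)) f₀ g h).submatrix id (Fin.castAdd (k + 1)) *
          remainderMatrix d (k + 1) t =
      borderedBidiagonal k (reducedFirstRow d f₀ g h t) (fun r => r)
        (fun r => h (r - 1) / h r) := by
  ext r s
  rw [Matrix.sub_apply, mul_apply, sub_eq_add_neg, ← sum_neg_distrib]
  obtain rfl | hr := eq_or_ne r 0
  · have hterm : ∀ a : Fin d, -((-1) ^ (d - (a : ℕ)) * ((d - 1 - a)! : K) * g (d - 1 - a) *
        remainderMatrix d (k + 1) t a s) =
          (-1) ^ (a.rev : ℕ) * (a.rev : ℕ)! * g a.rev * remainderCoeff a.rev s t := by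
      intro a
      rw [remainderMatrix, of_apply, show d - (a : ℕ) = a.rev + 1 by rw [Fin.val_rev]; omega,
        show d - 1 - (a : ℕ) = a.rev by rw [Fin.val_rev]; omega, pow_succ]
      ring
    have hsum : ∑ a : Fin d, -((-1) ^ (d - (a : ℕ)) * ((d - 1 - a)! : K) * g (d - 1 - a) *
        remainderMatrix d (k + 1) t a s) =
          ∑ i ∈ range d, (-1) ^ i * i ! * g i * remainderCoeff i s t := by
      rw [sum_congr rfl fun a _ => hterm a, sum_range]
      exact Equiv.sum_comp Fin.revPerm fun i : Fin d =>
        (-1) ^ (i : ℕ) * ((i : ℕ)! : K) * g i * remainderCoeff i s t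
    simp [schubertCellMatrix, borderedBidiagonal, reducedFirstRow, ← hsum]
  · have hr' : (r : ℕ) ≠ 0 := Fin.val_ne_zero_iff.mpr hr
    have hsub : d + (s : ℕ) = d + r - 1 ↔ (s : ℕ) + 1 = r := by omega
    have hhead : ∀ a : Fin d, (a : ℕ) ≠ d + r - 1 ∧ (a : ℕ) ≠ d + r := by omega
    simp [schubertCellMatrix, borderedBidiagonal, hr, hsub, hhead]

variable [CharZero K]

theorem osculatingEntry_add (m j : ℕ) (t : K) : osculatingEntry m (m + j) t = t ^ j / j ! := by
  have hfactorial : (j ! : K) * (m + j).descFactorial m = (m + j)! := by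
    have hnat := Nat.factorial_mul_descFactorial (m.le_add_right j)
    rw [Nat.add_sub_cancel_left] at hnat
    exact_mod_cast hnat
  have hj : (j ! : K) ≠ 0 := mod_cast j.factorial_ne_zero
  have hmj : ((m + j)! : K) ≠ 0 := mod_cast (m + j).factorial_ne_zero
  rw [osculatingEntry, Polynomial.iterate_derivative_C_mul,
    Polynomial.iterate_derivative_X_pow_eq_C_mul]
  simp only [Polynomial.eval_mul, Polynomial.eval_C, Polynomial.eval_pow, Polynomial.eval_X,
    Nat.add_sub_cancel_left]
  field_simp
  linear_combination t ^ j * hfactorial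

theorem det_osculatingMatrix_self (d : ℕ) (t : K) : (osculatingMatrix d d t).det = 1 := by
  rw [det_of_isUpperTriangular]
  · refine prod_eq_one fun i _ => ?_
    simpa [osculatingMatrix] using osculatingEntry_add (i : ℕ) 0 t
  · exact fun i j hji => osculatingEntry_of_lt hji t

/-- This is the value of the beta integral `∫₀¹ (1 - u)ᴺ uˢ du`. -/
theorem sum_neg_one_pow_mul_choose_div (N s : ℕ) :
    ∑ i ∈ range (N + 1), (N.choose i : K) * ((-1) ^ i / ((i + s + 1 : ℕ) : K)) =
      N ! * s ! / (N + s + 1)! := by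
  induction N generalizing s with
  | zero =>
    have hs : (s ! : K) ≠ 0 := mod_cast s.factorial_ne_zero
    simp only [zero_add, range_one, sum_singleton, Nat.choose_self, Nat.cast_one, pow_zero, one_mul,
      Nat.factorial_zero, Nat.factorial_succ, Nat.cast_mul]
    field_simp
  | succ N ih =>
    have hpascal := sum_choose_succ_mul (fun i _ => (-1 : K) ^ i / ((i + s + 1 : ℕ) : K)) N
    have hshift : ∑ i ∈ range (N + 1),
        (N.choose i : K) * ((-1) ^ (i + 1) / ((i + 1 + s + 1 : ℕ) : K)) =
          -(N ! * (s + 1)! / (N + (s + 1) + 1)!) := by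
      rw [← ih, ← sum_neg_distrib]
      refine sum_congr rfl fun i _ => ?_
      rw [pow_succ, show i + 1 + s + 1 = i + (s + 1) + 1 by omega]
      ring
    rw [hpascal, ih, hshift, show N + (s + 1) + 1 = N + s + 1 + 1 by omega,
      show N + 1 + s + 1 = N + s + 1 + 1 by omega, Nat.factorial_succ (N + s + 1),
      Nat.factorial_succ N, Nat.factorial_succ s]
    have hfactorial : ((N + s + 1)! : K) ≠ 0 := mod_cast (N + s + 1).factorial_ne_zero
    have hcast : ((N + s + 1 + 1 : ℕ) : K) ≠ 0 := mod_cast (N + s + 1).succ_ne_zero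
    push_cast at hcast ⊢
    field_simp
    ring

/-- Taylor's formula with integral remainder for `t ^ (N + s + 1) / (N + s + 1)!`. -/
theorem sum_pow_div_factorial_mul_remainderCoeff (N s : ℕ) (t : K) :
    ∑ i ∈ range (N + 1), t ^ (N - i) / (N - i)! * remainderCoeff i s t =
      t ^ (N + s + 1) / (N + s + 1)! := by
  have hN : (N ! : K) ≠ 0 := mod_cast N.factorial_ne_zero
  have hs : (s ! : K) ≠ 0 := mod_cast s.factorial_ne_zero
  have hterm : ∀ i ∈ range (N + 1), t ^ (N - i) / (N - i)! * remainderCoeff i s t =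
      (N.choose i : K) * ((-1) ^ i / ((i + s + 1 : ℕ) : K)) *
        (t ^ (N + s + 1) / (N ! * s !)) := by
    intro i hi
    have hiN : i ≤ N := Nat.lt_succ_iff.mp (mem_range.mp hi)
    rw [remainderCoeff, Nat.cast_choose K hiN,
      show N + s + 1 = N - i + (i + s + 1) by omega, pow_add]
    field_simp
    ring
  rw [sum_congr rfl hterm, ← sum_mul, sum_neg_one_pow_mul_choose_div]
  field_simp

theorem sum_osculatingEntry_mul_remainderCoeff {d m : ℕ} (hm : m < d) (s : ℕ) (t : K) :
    ∑ a ∈ range d, osculatingEntry m a t * remainderCoeff (d - (a + 1)) s t =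
      osculatingEntry m (d + s) t := by
  obtain ⟨N, rfl⟩ := Nat.exists_eq_add_of_lt hm
  rw [add_assoc, sum_range_add, sum_eq_zero, zero_add, ← sum_range_reflect]
  · rw [show m + (N + 1) + s = m + (N + s + 1) by omega, osculatingEntry_add,
      ← sum_pow_div_factorial_mul_remainderCoeff]
    refine sum_congr rfl fun i hi => ?_
    have hiN := mem_range.mp hi
    rw [osculatingEntry_add, Nat.add_sub_cancel,
      show m + (N + 1) - (m + (N - i) + 1) = i by omega]
  · intro a ha
    rw [osculatingEntry_of_lt (mem_range.mp ha), zero_mul]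

theorem osculatingMatrix_mul_remainderMatrix (d k : ℕ) (t : K) :
    osculatingMatrix d d t * remainderMatrix d k t =
      (osculatingMatrix d (d + k) t).submatrix id (Fin.natAdd d) := by
  ext m s
  simp only [mul_apply, osculatingMatrix, remainderMatrix, of_apply, submatrix_apply, id_eq,
    Fin.val_natAdd, Fin.val_rev]
  rw [← sum_osculatingEntry_mul_remainderCoeff m.isLt s t, sum_range]

theorem factorial_mul_remainderCoeff_mul_factorial (i s : ℕ) (t : K) :
    (-1) ^ i * i ! * remainderCoeff i s t * s ! = t ^ (i + s + 1) / (i + s + 1 : ℕ) := by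
  have hi : (i ! : K) ≠ 0 := mod_cast i.factorial_ne_zero
  have hs : (s ! : K) ≠ 0 := mod_cast s.factorial_ne_zero
  have hsign : (-1 : K) ^ i * (-1) ^ i = 1 := by rw [← mul_pow, neg_one_mul, neg_neg, one_pow]
  rw [remainderCoeff]
  field_simp
  rw [sq, hsign, one_mul]

theorem sum_reducedFirstRow_mul_factorial_mul (k d : ℕ) (f₀ t : K) (g h : ℕ → K) (h0 : h 0 ≠ 0) :
    ∑ s ∈ range (k + 1), reducedFirstRow d f₀ g h t s * s ! * h s =
      (∑ i ∈ range d, ∑ j ∈ range (k + 1), g i * h j / ((i + j + 1 : ℕ) : K) * t ^ (i + j + 1)) +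
        f₀ := by
  have hf₀ : ∑ s ∈ range (k + 1), (if s = 0 then f₀ / h 0 else 0) * s ! * h s = f₀ := by
    simp [ite_mul, h0]
  simp only [reducedFirstRow, add_mul, sum_add_distrib, hf₀, sum_mul]
  rw [add_comm, sum_comm]
  congr 1
  refine sum_congr rfl fun i _ => sum_congr rfl fun s _ => ?_
  linear_combination g i * h s * factorial_mul_remainderCoeff_mul_factorial i s t

theorem det_osculating_condition_general {k d n : ℕ} (hk : 1 ≤ k) (hn : k + d = n) (f₀ : K)
    (g h : ℕ → K) (hne : ∀ j < k, h j ≠ 0) (t : K) :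
    ((fromRows (schubertCellMatrix k d n f₀ g h) (osculatingMatrix d n t)).submatrix
      (finSumFinEquiv.trans (finCongr hn)).symm id).det =
        (-1) ^ (k * d) * ((∑ i ∈ range d, ∑ j ∈ range k,
          g i * h j / ((i + j + 1 : ℕ) : K) * t ^ (i + j + 1)) + f₀) / h (k - 1) := by
  obtain rfl : n = d + k := by omega
  obtain ⟨k, rfl⟩ := Nat.exists_eq_add_of_le' hk
  set S := schubertCellMatrix (k + 1) d (d + (k + 1)) f₀ g h
  have hblocks : (fromRows S (osculatingMatrix d (d + (k + 1)) t)).submatrix id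
      (Sum.elim (Fin.natAdd d) (Fin.castAdd (k + 1))) =
        fromBlocks (S.submatrix id (Fin.natAdd d)) (S.submatrix id (Fin.castAdd (k + 1)))
          (osculatingMatrix d d t * remainderMatrix d (k + 1) t) (osculatingMatrix d d t) := by
    rw [osculatingMatrix_mul_remainderMatrix]
    ext (r | m) (s | a) <;> rfl
  rw [det_submatrix_finSumFinEquiv_symm, hblocks, det_fromBlocks_mul₂₁, det_osculatingMatrix_self,
    mul_one, schubertCellMatrix_sub_mul_remainderMatrix,
    det_borderedBidiagonal_ratio _ _ _ _ fun j hj => hne j (Nat.lt_succ_of_le hj)]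
  simp only [← Nat.cast_prod, prod_range_add_one_eq_factorial]
  rw [sum_reducedFirstRow_mul_factorial_mul _ _ _ _ _ _ (hne 0 k.succ_pos), mul_div_assoc,
    Nat.add_sub_cancel]

end Field

/-- **Lemma 4 (the determinant computation).** With `A` the explicit `k × n` matrix
parameterizing the Schubert cell of `X_□(∞)` (first row
`(c₁ g_{n−k−1}, …, c_{n−k} g₀, f₀/h₀, 0, …, 0)` with `c_m = (−1)^{n−k−m+1}(n−k−m)!`,
and row `i` for `2 ≤ i ≤ k` having `−(i−1)` in column `n−k+i−1` and `h_{i−2}/h_{i−1}`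
in column `n−k+i`), and `B(t)` the `(n−k) × n` matrix whose `m`-th row is
`γ^{(m−1)}(t)`, the determinant of the stacked `n × n` matrix equals
`(−1)^{k(n−k)} ( Σ_{i<n−k} Σ_{j<k} (g_i h_j/(i+j+1)) t^{i+j+1} + f₀ )`. -/
theorem det_osculating_condition (k n : ℕ) (hk : 1 ≤ k) (hkn : k < n)
    (f₀ : ℂ) (g h : ℕ → ℂ)
    (hg : g (n - k - 1) = 1) (hh : h (k - 1) = 1)
    (hhnz : ∀ j, j < k - 1 → h j ≠ 0) :
    ∀ t : ℂ,
      Matrix.det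
        ((Matrix.fromRows
            (Matrix.of fun (r : Fin k) (j : Fin n) =>
              if (r : ℕ) = 0 then
                (if (j : ℕ) < n - k then
                    (-1 : ℂ) ^ (n - k - (j : ℕ)) *
                      ((Nat.factorial (n - k - 1 - (j : ℕ))) : ℂ) *
                      g (n - k - 1 - (j : ℕ))
                  else if (j : ℕ) = n - k then f₀ / h 0 else 0)
              else
                (if (j : ℕ) = n - k + (r : ℕ) - 1 then -((r : ℕ) : ℂ)
                  else if (j : ℕ) = n - k + (r : ℕ) then h ((r : ℕ) - 1) / h (r : ℕ)
                  else 0))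
            (Matrix.of fun (m : Fin (n - k)) (j : Fin n) => gammaVec n (m : ℕ) t j)).submatrix
          (⇑(finSumFinEquiv.trans (finCongr (Nat.add_sub_cancel' hkn.le))).symm) id)
      = (-1 : ℂ) ^ (k * (n - k)) *
          ((∑ i ∈ Finset.range (n - k), ∑ j ∈ Finset.range k,
              g i * h j / ((i + j + 1 : ℕ) : ℂ) * t ^ (i + j + 1)) + f₀) := by
  intro t
  have hne : ∀ j < k, h j ≠ 0 := fun j hj => by
    obtain hj | rfl := (Nat.le_sub_one_of_lt hj).lt_or_eq
    · exact hhnz j hj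
    · simp [hh]
  refine (det_osculating_condition_general hk (Nat.add_sub_cancel' hkn.le) f₀ g h hne t).trans ?_
  rw [hh, div_one]
end
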